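/- arXiv:math/0501480 — 5 statements merged into one kernel-verified Lean document; each statement's English description precedes it below -/
import Mathlib

section
/- For n ≥ 4, let K be the kernel of the composition B_n → ℤ → ℤ/n(n-1)ℤ, where the first map is the length homomorphism L (determined by σ_i ↦ 1) and the second is reduction modulo n(n-1). Then K is a finite index subgroup of B_n containing Z = Z(B_n), the map K → Z given by g ↦ z^{L(g)/n(n-1)} (where z = (σ_1⋯σ_{n-1})^n generates Z) is a group homomorphism splitting the central extension 1 → Z → K → K/Z → 1, and consequently K is isomorphic to the external direct product (K/Z) × Z, where K/Z is a finite index subgroup of B_n/Z. In particular, B_n is abstractly commensurable to (K/Z) × ℤ. -/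
/-- The braid relations on `m` generators `σ_1, …, σ_m` (so this presents `B_{m+1}`). -/
def braidRels (m : ℕ) : Set (FreeGroup (Fin m)) :=
  {r | (∃ i j : Fin m, (j : ℕ) = (i : ℕ) + 1 ∧
        r = .of i * .of j * .of i * (.of j * .of i * .of j)⁻¹) ∨
       (∃ i j : Fin m, (i : ℕ) + 1 < (j : ℕ) ∧
        r = .of i * .of j * (.of j * .of i)⁻¹)}

/-- Artin's braid group on `n` strands, presented by generators `σ_1, …, σ_{n-1}`
and the braid relations. -/
abbrev BraidGroup (n : ℕ) : Type := PresentedGroup (braidRels (n - 1))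

/-- The standard generator `σ_i` (indexed by `i : Fin (n-1)`) of the braid group. -/
def σ {n : ℕ} (i : Fin (n - 1)) : BraidGroup n := PresentedGroup.of i

/-- The element `(σ_1 σ_2 ⋯ σ_{n-1})^n`, which generates the center of `B_n` for `n ≥ 3`. -/
def fullTwist (n : ℕ) : BraidGroup n := (List.ofFn (σ (n := n))).prod ^ n

/-- The length homomorphism `L : B_n → ℤ`, `σ_i ↦ 1`. -/
noncomputable def lengthHom (n : ℕ) : BraidGroup n →* Multiplicative ℤ :=
  PresentedGroup.toGroup (f := fun _ => Multiplicative.ofAdd (1 : ℤ))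
    (by rintro r (⟨i, j, -, rfl⟩ | ⟨i, j, -, rfl⟩) <;> simp <;> group)

/-- The kernel `K` of the composition `B_n → ℤ → ℤ/n(n-1)ℤ` of the length
homomorphism with reduction mod `n(n-1)`. -/
noncomputable def lengthKer (n : ℕ) : Subgroup (BraidGroup n) :=
  MonoidHom.ker
    ((AddMonoidHom.toMultiplicative (Int.castAddHom (ZMod (n * (n - 1))))).comp
      (lengthHom n))

/-!
Positive words on the generators form the Artin monoid of a path graph. For the simply laced Artin
monoid of any triangle-free graph, Garside's cube condition gives left and right cancellation. In
the braid case the half twist `Δ` is a least common multiple of the generators, so every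
quasi-central positive braid is a power of `Δ`, whence `z = Δ ^ 2` and, as soon as `Δ` itself is not
central, every central positive braid is a power of `z`. As `z` is central and every positive braid
divides a power of it, inverting `z` embeds the positive braids in `B_n`, where every element is a
positive braid times a power of `z`; hence `Z = ⟨z⟩`. Since `L(z) = n(n-1)`, the map
`g ↦ z ^ (L(g) / n(n-1))` retracts `K` onto `Z`, and a group retracting onto a normal subgroup is
the product of it and the quotient.
-/

/-- The defining relations of the simply laced Artin monoid of a graph: adjacent generators satisfy
the braid relation, and distinct non-adjacent generators (adjacent in `Γᶜ`) commute. -/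
inductive ArtinRel {V : Type*} (Γ : SimpleGraph V) : FreeMonoid V → FreeMonoid V → Prop
  | braid {a b : V} (h : Γ.Adj a b) :
      ArtinRel Γ (.of a * .of b * .of a) (.of b * .of a * .of b)
  | comm {a b : V} (h : Γᶜ.Adj a b) : ArtinRel Γ (.of a * .of b) (.of b * .of a)

/-- The simply laced Artin monoid with Coxeter graph `Γ`. For the path graph on `m` vertices it is
the monoid of positive braids on `m + 1` strands. -/
abbrev ArtinMonoid {V : Type*} (Γ : SimpleGraph V) : Type _ := PresentedMonoid (ArtinRel Γ)

namespace ArtinMonoid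

section Basic

variable {V : Type*} {Γ : SimpleGraph V} {a b : V}

variable (Γ) in
/-- The element of the Artin monoid represented by a word in the vertices. -/
def ofWord : FreeMonoid V →* ArtinMonoid Γ := PresentedMonoid.mk (ArtinRel Γ)

/-- The standard generator of the Artin monoid attached to a vertex. -/
def gen (a : V) : ArtinMonoid Γ := PresentedMonoid.of (ArtinRel Γ) a

theorem ofWord_of (a : V) : ofWord Γ (.of a) = gen a := rfl

theorem ofWord_surjective : Function.Surjective (ofWord Γ) := PresentedMonoid.surjective_mk

theorem ofWord_eq_ofWord_iff {u v : FreeMonoid V} :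
    ofWord Γ u = ofWord Γ v ↔ ConGen.Rel (ArtinRel Γ) u v :=
  PresentedMonoid.mk_eq_mk_iff

theorem gen_comm (h : Γᶜ.Adj a b) (x : ArtinMonoid Γ) :
    gen a * (gen b * x) = gen b * (gen a * x) := by
  simpa only [gen, PresentedMonoid.of, map_mul, mul_assoc] using
    congrArg (· * x) (PresentedMonoid.mk_eq_mk_of_rel (.comm h))

theorem gen_braid (h : Γ.Adj a b) (x : ArtinMonoid Γ) :
    gen a * (gen b * (gen a * x)) = gen b * (gen a * (gen b * x)) := by
  simpa only [gen, PresentedMonoid.of, map_mul, mul_assoc] using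
    congrArg (· * x) (PresentedMonoid.mk_eq_mk_of_rel (.braid h))

theorem eq_one_or_exists_eq_gen_mul (x : ArtinMonoid Γ) : x = 1 ∨ ∃ a y, x = gen a * y := by
  obtain ⟨u, rfl⟩ := ofWord_surjective x
  cases u using FreeMonoid.casesOn with
  | one => exact .inl rfl
  | of_mul a u => exact .inr ⟨a, ofWord Γ u, rfl⟩

@[elab_as_elim]
theorem gen_mul_induction {C : ArtinMonoid Γ → Prop} (x : ArtinMonoid Γ) (one : C 1)
    (gen_mul : ∀ a y, C y → C (gen a * y)) : C x := by
  obtain ⟨u, rfl⟩ := ofWord_surjective x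
  induction u using FreeMonoid.recOn with
  | one => exact one
  | of_mul a u ih => exact gen_mul a _ ih

theorem mem_center_of_commute_gen {x : ArtinMonoid Γ} (h : ∀ a, Commute x (gen a)) :
    x ∈ Submonoid.center (ArtinMonoid Γ) := by
  rw [Submonoid.mem_center_iff]
  intro y
  induction y using gen_mul_induction with
  | one => rw [one_mul, mul_one]
  | gen_mul a y ih => exact (h a).symm.mul_left ih

/-- The word length of an element of the Artin monoid, which is well defined because the relations
are homogeneous. -/
def length (x : ArtinMonoid Γ) : ℕ :=
  Multiplicative.toAdd <| PresentedMonoid.lift (fun _ => Multiplicative.ofAdd 1)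
    (by rintro _ _ (⟨-⟩ | ⟨-⟩) <;> simp) x

@[simp]
theorem length_mul (x y : ArtinMonoid Γ) : (x * y).length = x.length + y.length := by
  simp [length]

@[simp]
theorem length_one : (1 : ArtinMonoid Γ).length = 0 := by simp [length]

@[simp]
theorem length_gen (a : V) : (gen a : ArtinMonoid Γ).length = 1 := rfl

@[simp]
theorem length_pow (x : ArtinMonoid Γ) (k : ℕ) : (x ^ k).length = k * x.length := by
  simp [length]

theorem eq_one_of_length_eq_zero {x : ArtinMonoid Γ} (h : x.length = 0) : x = 1 := by
  rcases eq_one_or_exists_eq_gen_mul x with rfl | ⟨a, y, rfl⟩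
  · rfl
  · simp at h

theorem exists_eq_gen_of_length_eq_one {x : ArtinMonoid Γ} (h : x.length = 1) :
    ∃ a, x = gen a := by
  rcases eq_one_or_exists_eq_gen_mul x with rfl | ⟨a, y, rfl⟩
  · simp at h
  · exact ⟨a, by rw [eq_one_of_length_eq_zero (x := y) (by simpa using h), mul_one]⟩

end Basic

section Cancellation

variable {V : Type*} {Γ : SimpleGraph V} {a b c : V} {x y v : ArtinMonoid Γ} {N : ℕ}

/-- The evident solutions of `gen a * x = gen b * y`, namely the right multiples of the trivial
relation or of the defining relation between `a` and `b`. -/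
def HeadRel (a : V) (x : ArtinMonoid Γ) (b : V) (y : ArtinMonoid Γ) : Prop :=
  (a = b ∧ x = y) ∨
  (Γ.Adj a b ∧ ∃ w, x = gen b * (gen a * w) ∧ y = gen a * (gen b * w)) ∨
  (Γᶜ.Adj a b ∧ ∃ w, x = gen b * w ∧ y = gen a * w)

namespace HeadRel

theorem symm (h : HeadRel a x b y) : HeadRel b y a x := by
  rcases h with ⟨rfl, rfl⟩ | ⟨hab, w, rfl, rfl⟩ | ⟨hab, w, rfl, rfl⟩
  · exact .inl ⟨rfl, rfl⟩
  · exact .inr <| .inl ⟨hab.symm, w, rfl, rfl⟩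
  · exact .inr <| .inr ⟨hab.symm, w, rfl, rfl⟩

theorem mul_right (h : HeadRel a x b y) (z : ArtinMonoid Γ) : HeadRel a (x * z) b (y * z) := by
  rcases h with ⟨rfl, rfl⟩ | ⟨hab, w, rfl, rfl⟩ | ⟨hab, w, rfl, rfl⟩
  · exact .inl ⟨rfl, rfl⟩
  · exact .inr <| .inl ⟨hab, w * z, by simp only [mul_assoc], by simp only [mul_assoc]⟩
  · exact .inr <| .inr ⟨hab, w * z, by simp only [mul_assoc], by simp only [mul_assoc]⟩

theorem eq (h : HeadRel a x a y) : x = y := by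
  simpa [HeadRel] using h

theorem exists_of_adj (h : HeadRel a x b y) (hab : Γ.Adj a b) :
    ∃ w, x = gen b * (gen a * w) ∧ y = gen a * (gen b * w) := by
  simpa [HeadRel, hab, hab.ne] using h

theorem exists_of_compl_adj (h : HeadRel a x b y) (hab : Γᶜ.Adj a b) :
    ∃ w, x = gen b * w ∧ y = gen a * w := by
  have hab' := (Γ.compl_adj a b).1 hab
  simpa [HeadRel, hab'.1, hab'.2] using h

theorem gen_mul (hac : Γᶜ.Adj a c) (hbc : Γᶜ.Adj b c) (h : HeadRel a x b y) :
    HeadRel a (gen c * x) b (gen c * y) := by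
  rcases h with ⟨rfl, rfl⟩ | ⟨hab, w, rfl, rfl⟩ | ⟨hab, w, rfl, rfl⟩
  · exact .inl ⟨rfl, rfl⟩
  · refine .inr <| .inl ⟨hab, gen c * w, ?_, ?_⟩
    · rw [gen_comm hac, gen_comm hbc]
    · rw [gen_comm hbc, gen_comm hac]
  · refine .inr <| .inr ⟨hab, gen c * w, ?_, ?_⟩
    · rw [gen_comm hbc]
    · rw [gen_comm hac]

end HeadRel

/-- In length below `N`, all solutions of `gen a * x = gen b * y` are evident. This is the induction
hypothesis of Garside's proof of cancellation. -/
def HeadRelBelow (Γ : SimpleGraph V) (N : ℕ) : Prop :=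
  ∀ ⦃a b : V⦄ ⦃x y : ArtinMonoid Γ⦄, x.length < N → gen a * x = gen b * y → HeadRel a x b y

namespace HeadRelBelow

theorem headRel_of_adj_of_compl_adj (hN : HeadRelBelow Γ N) (hac : Γ.Adj a c)
    (hbc : Γᶜ.Adj b c) (hx : x.length + 2 ≤ N) (h : gen a * (gen c * x) = gen b * y) :
    HeadRel a (gen c * (gen a * x)) b (gen c * y) := by
  rcases hN (by simp; omega) h with ⟨rfl, -⟩ | ⟨hab, t, hxt, rfl⟩ | ⟨hab, t, hxt, rfl⟩
  · exact absurd hac ((Γ.compl_adj _ _).1 hbc).2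
  · obtain ⟨s, rfl, hts⟩ := (hN (by omega) hxt).exists_of_compl_adj hbc.symm
    have hlen : t.length < N := by
      have := congrArg length hts
      simp only [length_mul, length_gen] at this hx
      omega
    obtain ⟨r, rfl, rfl⟩ := (hN hlen hts).exists_of_adj hac
    refine .inr <| .inl ⟨hab, gen c * (gen a * (gen b * r)), ?_, ?_⟩
    · rw [gen_braid hab, gen_comm hbc r, gen_comm hbc.symm, gen_braid hac.symm]
    · rw [gen_comm hbc, gen_braid hac.symm, gen_braid hab, gen_comm hbc.symm]
  · obtain ⟨s, rfl, rfl⟩ := (hN (by omega) hxt).exists_of_compl_adj hbc.symm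
    refine .inr <| .inr ⟨hab, gen c * (gen a * s), ?_, ?_⟩
    · rw [gen_comm hab, gen_comm hbc]
    · rw [gen_braid hac]

theorem headRel_of_adj_of_adj (hN : HeadRelBelow Γ N) (hac : Γ.Adj a c) (hbc : Γ.Adj b c)
    (hab : ¬Γ.Adj a b) (hx : x.length + 2 ≤ N) (h : gen a * (gen c * x) = gen b * (gen c * y)) :
    HeadRel a (gen c * (gen a * x)) b (gen c * (gen b * y)) := by
  have hxy : x.length = y.length := by simpa using congrArg length h
  rcases eq_or_ne a b with rfl | hne
  · obtain rfl := (hN (by omega) (hN (by simp; omega) h).eq).eq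
    exact .inl ⟨rfl, rfl⟩
  have hab : Γᶜ.Adj a b := (Γ.compl_adj _ _).2 ⟨hne, hab⟩
  obtain ⟨t, hxt, hyt⟩ := (hN (by simp; omega) h).exists_of_compl_adj hab
  obtain ⟨s, rfl, rfl⟩ := (hN (by omega) hxt).exists_of_adj hbc.symm
  obtain ⟨s', rfl, hs'⟩ := (hN (by omega) hyt).exists_of_adj hac.symm
  simp only [length_mul, length_gen] at hx hxy
  have hss' : gen b * s = gen a * s' := (hN (by simp; omega) hs').eq
  obtain ⟨r, rfl, rfl⟩ := (hN (by omega) hss').exists_of_compl_adj hab.symm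
  refine .inr <| .inr ⟨hab, gen c * (gen b * (gen a * (gen c * r))), ?_, ?_⟩
  · rw [gen_comm hab, gen_braid hac, gen_braid hbc.symm]
  · rw [gen_comm hab.symm, gen_braid hbc, gen_braid hac.symm, gen_comm hab]

end HeadRelBelow

/-- Two words are head related if both are empty, or if removing their first letters leaves an
evident solution of the equality of their values. -/
def WordHeadRel (Γ : SimpleGraph V) (u v : FreeMonoid V) : Prop :=
  (u = 1 ∧ v = 1) ∨ ∃ a b u' v', u = .of a * u' ∧ v = .of b * v' ∧
    HeadRel a (ofWord Γ u') b (ofWord Γ v')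

namespace WordHeadRel

variable {u v : FreeMonoid V}

theorem refl (u : FreeMonoid V) : WordHeadRel Γ u u := by
  cases u using FreeMonoid.casesOn with
  | one => exact .inl ⟨rfl, rfl⟩
  | of_mul a u => exact .inr ⟨a, a, u, u, rfl, rfl, .inl ⟨rfl, rfl⟩⟩

theorem symm (h : WordHeadRel Γ u v) : WordHeadRel Γ v u := by
  rcases h with ⟨hu, hv⟩ | ⟨a, b, u', v', hu, hv, h⟩
  · exact .inl ⟨hv, hu⟩
  · exact .inr ⟨b, a, v', u', hv, hu, h.symm⟩

theorem of_artinRel (h : ArtinRel Γ u v) : WordHeadRel Γ u v := by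
  cases h with
  | @braid a b hab =>
    refine .inr ⟨a, b, .of b * .of a, .of a * .of b, mul_assoc .., mul_assoc .., ?_⟩
    exact .inr <| .inl ⟨hab, 1, rfl, rfl⟩
  | @comm a b hab => exact .inr ⟨a, b, .of b, .of a, rfl, rfl, .inr <| .inr ⟨hab, 1, rfl, rfl⟩⟩

theorem headRel (h : WordHeadRel Γ (.of a * u) (.of b * v)) :
    HeadRel a (ofWord Γ u) b (ofWord Γ v) := by
  rcases h with ⟨hu, -⟩ | ⟨a', b', u', v', hu, hv, h⟩
  · exact absurd hu (List.cons_ne_nil a u.toList)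
  · obtain ⟨rfl, rfl⟩ := List.cons.inj hu
    obtain ⟨rfl, rfl⟩ := List.cons.inj hv
    exact h

end WordHeadRel

section TriangleFree

variable [hΓ : Fact (Γ.CliqueFree 3)]

theorem not_adj_of_adj_of_adj (hac : Γ.Adj a c) (hbc : Γ.Adj b c) : ¬Γ.Adj a b := by
  classical
  exact fun hab => hΓ.out {a, b, c} (SimpleGraph.is3Clique_triple_iff.2 ⟨hab, hac, hbc⟩)

/-- Garside's cube condition. -/
theorem HeadRelBelow.trans (hN : HeadRelBelow Γ N) (hv : v.length ≤ N) (hxv : HeadRel a x c v)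
    (hvy : HeadRel c v b y) : HeadRel a x b y := by
  rcases hxv with ⟨rfl, rfl⟩ | ⟨hac, w, rfl, rfl⟩ | ⟨hac, w, rfl, rfl⟩
  · exact hvy
  all_goals
    simp only [length_mul, length_gen] at hv
    rcases hvy with ⟨rfl, rfl⟩ | ⟨hcb, t, hwt, rfl⟩ | ⟨hcb, t, hwt, rfl⟩
  · exact .inr <| .inl ⟨hac, w, rfl, rfl⟩
  · exact hN.headRel_of_adj_of_adj hac hcb.symm (not_adj_of_adj_of_adj hac hcb.symm) (by omega) hwt
  · exact hN.headRel_of_adj_of_compl_adj hac hcb.symm (by omega) hwt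
  · exact .inr <| .inr ⟨hac, w, rfl, rfl⟩
  · have hlen : t.length + 2 ≤ N := by
      have := congrArg length hwt
      simp only [length_mul, length_gen] at this
      omega
    exact (hN.headRel_of_adj_of_compl_adj hcb.symm hac hlen hwt.symm).symm
  · exact (hN (by omega) hwt).gen_mul hac hcb.symm

theorem HeadRelBelow.wordHeadRel_trans (hN : HeadRelBelow Γ N) {u v w : FreeMonoid V}
    (hv : (ofWord Γ v).length ≤ N + 1) (huv : WordHeadRel Γ u v)
    (hvw : WordHeadRel Γ v w) : WordHeadRel Γ u w := by
  rcases huv with ⟨rfl, rfl⟩ | ⟨a, c, u', v', rfl, rfl, huv⟩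
  · exact hvw
  · rcases hvw with ⟨hv1, -⟩ | ⟨c', b, v'', w', hv', rfl, hvw⟩
    · exact absurd hv1 (List.cons_ne_nil c v'.toList)
    · obtain ⟨rfl, rfl⟩ := List.cons.inj hv'
      have hlen : (ofWord Γ v').length ≤ N := by
        rw [map_mul, length_mul, ofWord_of, length_gen] at hv
        omega
      exact .inr ⟨a, b, u', w', rfl, rfl, hN.trans hlen huv hvw⟩

theorem HeadRelBelow.wordHeadRel_of_rel (hN : HeadRelBelow Γ N) {u v : FreeMonoid V}
    (h : ConGen.Rel (ArtinRel Γ) u v)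
    (hu : (ofWord Γ u).length ≤ N + 1) : WordHeadRel Γ u v := by
  induction h with
  | of u v h => exact .of_artinRel h
  | refl u => exact .refl u
  | symm h ih => exact (ih (by rwa [ofWord_eq_ofWord_iff.2 h])).symm
  | trans h _ ih ih' =>
    rw [ofWord_eq_ofWord_iff.2 h] at hu
    exact hN.wordHeadRel_trans hu (ih (by rwa [ofWord_eq_ofWord_iff.2 h])) (ih' hu)
  | @mul u v s t huv hst ih ih' =>
    rw [map_mul, length_mul] at hu
    rcases ih (by omega) with ⟨rfl, rfl⟩ | ⟨a, b, u', v', rfl, rfl, h⟩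
    · simpa only [one_mul] using ih' (by omega)
    · refine .inr ⟨a, b, u' * s, v' * t, mul_assoc .., mul_assoc .., ?_⟩
      rw [map_mul, map_mul, ← ofWord_eq_ofWord_iff.2 hst]
      exact h.mul_right _

variable (Γ) in
theorem headRelBelow (N : ℕ) : HeadRelBelow Γ N := by
  induction N with
  | zero => exact fun a b x y h => absurd h (Nat.not_lt_zero _)
  | succ N ih =>
    intro a b x y hx h
    obtain ⟨u, rfl⟩ := ofWord_surjective x
    obtain ⟨v, rfl⟩ := ofWord_surjective y
    have hword : ofWord Γ (.of a * u) = ofWord Γ (.of b * v) := by simpa only [map_mul, ofWord_of]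
    refine (ih.wordHeadRel_of_rel (ofWord_eq_ofWord_iff.1 hword) ?_).headRel
    rw [map_mul, length_mul, ofWord_of, length_gen]
    omega

theorem headRel_of_gen_mul_eq_gen_mul (h : gen a * x = gen b * y) : HeadRel a x b y :=
  headRelBelow Γ (x.length + 1) (Nat.lt_succ_self _) h

theorem gen_injective : Function.Injective (gen : V → ArtinMonoid Γ) := by
  intro a b h
  rcases headRel_of_gen_mul_eq_gen_mul (x := 1) (y := 1) (by simpa only [mul_one] using h) with
    ⟨hab, -⟩ | ⟨-, w, hw, -⟩ | ⟨-, w, hw, -⟩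
  · exact hab
  all_goals exact absurd (congrArg length hw) (by simp; try omega)

instance : IsLeftCancelMul (ArtinMonoid Γ) where
  mul_left_cancel z x y h := by
    induction z using gen_mul_induction with
    | one => simpa using h
    | gen_mul a z ih =>
      simp only [mul_assoc] at h
      exact ih (headRel_of_gen_mul_eq_gen_mul h).eq

end TriangleFree

/-- The anti-automorphism of the Artin monoid that fixes the generators. -/
def reverse : ArtinMonoid Γ →* (ArtinMonoid Γ)ᵐᵒᵖ :=
  PresentedMonoid.lift (fun a => .op (gen a)) <| by
    rintro _ _ (⟨h⟩ | ⟨h⟩)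
    · simpa [mul_assoc] using congrArg MulOpposite.op (gen_braid h 1)
    · simpa using congrArg MulOpposite.op (gen_comm h.symm 1)

theorem reverse_gen (a : V) : reverse (gen a : ArtinMonoid Γ) = .op (gen a) := rfl

theorem unop_reverse_unop_reverse (x : ArtinMonoid Γ) :
    (reverse (reverse x).unop).unop = x := by
  induction x using gen_mul_induction with
  | one => simp
  | gen_mul a x ih => simp [reverse_gen, ih]

theorem reverse_injective : Function.Injective (reverse (Γ := Γ)) := fun x y h => by
  rw [← unop_reverse_unop_reverse x, h, unop_reverse_unop_reverse]

instance [Fact (Γ.CliqueFree 3)] : IsCancelMul (ArtinMonoid Γ) where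
  mul_right_cancel z x y h := by
    have h' : (reverse z).unop * (reverse x).unop = (reverse z).unop * (reverse y).unop := by
      simpa using congrArg (fun t => (reverse t).unop) h
    exact reverse_injective (MulOpposite.unop_injective (mul_left_cancel h'))

end Cancellation

section Garside

variable {V : Type*} {Γ : SimpleGraph V} {a b : V} {p x y Δ : ArtinMonoid Γ}

/-- An element is quasi-central if it conjugates every standard generator to a standard
generator. -/
def IsQuasicentral (p : ArtinMonoid Γ) : Prop := ∀ a, ∃ b, gen a * p = p * gen b

theorem isQuasicentral_of_mem_center (h : p ∈ Submonoid.center (ArtinMonoid Γ)) :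
    IsQuasicentral p :=
  fun a => ⟨a, Submonoid.mem_center_iff.1 h _⟩

/-- A Garside element of an Artin monoid: a least common right multiple of the generators. -/
structure IsGarside (Δ : ArtinMonoid Γ) : Prop where
  gen_dvd : ∀ a, gen a ∣ Δ
  dvd_of_forall_gen_dvd : ∀ {x}, (∀ a, gen a ∣ x) → Δ ∣ x

variable [Fact (Γ.CliqueFree 3)]

theorem gen_dvd_of_gen_dvd_mul (hx : x ∈ Submonoid.closure (gen '' {a | Γᶜ.Adj a b}))
    (h : gen b ∣ x * y) : gen b ∣ y := by
  induction hx using Submonoid.closure_induction generalizing y with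
  | mem x hx =>
    obtain ⟨a, hab, rfl⟩ := hx
    obtain ⟨w, hw⟩ := h
    obtain ⟨v, hv, -⟩ := (headRel_of_gen_mul_eq_gen_mul hw).exists_of_compl_adj hab
    exact ⟨v, hv⟩
  | one => rwa [one_mul] at h
  | mul x x' _ _ ih ih' => exact ih' (ih (by rwa [mul_assoc] at h))

theorem gen_dvd_gen_mul_of_dvd (ha : gen a ∣ x) (hb : gen b ∣ x) : gen b ∣ gen a * x := by
  obtain ⟨y, hy⟩ := ha
  obtain ⟨z, rfl⟩ := hb
  rcases headRel_of_gen_mul_eq_gen_mul hy with ⟨rfl, -⟩ | ⟨hba, w, rfl, rfl⟩ | ⟨hba, w, rfl, rfl⟩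
  · exact ⟨_, rfl⟩
  · exact ⟨gen a * (gen b * (gen b * w)), gen_braid hba.symm _⟩
  · exact ⟨gen a * (gen a * w), gen_comm hba.symm _⟩

theorem IsQuasicentral.gen_dvd_of_adj (hp : IsQuasicentral p) (hab : Γ.Adj a b) (ha : gen a ∣ p) :
    gen b ∣ p := by
  obtain ⟨x, rfl⟩ := ha
  obtain ⟨a', ha'⟩ := hp a
  obtain ⟨b', hb'⟩ := hp b
  obtain ⟨y, hy, -⟩ :=
    (headRel_of_gen_mul_eq_gen_mul (hb'.trans (mul_assoc ..))).exists_of_adj hab.symm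
  have hx : gen a * x = gen b * (y * gen a') := by
    apply mul_left_cancel (a := gen a)
    rw [ha', hy]
    simp only [mul_assoc]
  exact ⟨_, hx⟩

theorem IsQuasicentral.gen_dvd (hΓ : Γ.Preconnected) (hp : IsQuasicentral p) (hp1 : p ≠ 1)
    (b : V) : gen b ∣ p := by
  obtain ⟨a, y, hy⟩ := (eq_one_or_exists_eq_gen_mul p).resolve_left hp1
  induction (hΓ b a).some with
  | nil => exact ⟨y, hy⟩
  | cons h _ ih => exact hp.gen_dvd_of_adj h.symm (ih hy)

namespace IsGarside

theorem isQuasicentral (hΔ : IsGarside Δ) : IsQuasicentral Δ := by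
  intro a
  obtain ⟨t, ht⟩ : Δ ∣ gen a * Δ :=
    hΔ.dvd_of_forall_gen_dvd fun b => gen_dvd_gen_mul_of_dvd (hΔ.gen_dvd a) (hΔ.gen_dvd b)
  have hlen := congrArg length ht
  rw [length_mul, length_mul, length_gen] at hlen
  obtain ⟨b, rfl⟩ := exists_eq_gen_of_length_eq_one (x := t) (by omega)
  exact ⟨b, ht⟩

theorem isQuasicentral_of_mul [Finite V] (hΔ : IsGarside Δ) (hp : IsQuasicentral (Δ * p)) :
    IsQuasicentral p := by
  choose f hf using hΔ.isQuasicentral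
  have hf_inj : Function.Injective f := fun a b hab =>
    gen_injective (mul_right_cancel ((hf a).trans (hab ▸ (hf b).symm)))
  intro a
  obtain ⟨a, rfl⟩ := Finite.surjective_of_injective hf_inj a
  obtain ⟨b, hb⟩ := hp a
  exact ⟨b, mul_left_cancel (a := Δ) (by rw [← mul_assoc, ← hf, mul_assoc, hb, mul_assoc])⟩

theorem exists_eq_pow [Finite V] (hΔ : IsGarside Δ) (hΓ : Γ.Preconnected)
    (hp : IsQuasicentral p) : ∃ k, p = Δ ^ k := by
  induction hl : p.length using Nat.strong_induction_on generalizing p with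
  | _ N ih =>
    by_cases hp1 : p = 1
    · exact ⟨0, by rw [hp1, pow_zero]⟩
    obtain ⟨a, -⟩ := (eq_one_or_exists_eq_gen_mul p).resolve_left hp1
    obtain ⟨Δ', hΔ'⟩ := hΔ.gen_dvd a
    obtain ⟨q, rfl⟩ := hΔ.dvd_of_forall_gen_dvd (hp.gen_dvd hΓ hp1)
    have hlt : q.length < N := by
      rw [length_mul, hΔ', length_mul, length_gen] at hl
      omega
    obtain ⟨k, rfl⟩ := ih _ hlt (hΔ.isQuasicentral_of_mul hp) rfl
    exact ⟨k + 1, (pow_succ' Δ k).symm⟩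

end IsGarside

end Garside

end ArtinMonoid

/-- The Ore condition for the powers of a central element of a cancellative monoid. -/
abbrev oreSetPowers {M : Type*} [Monoid M] [IsRightCancelMul M] {z : M}
    (hz : z ∈ Submonoid.center M) : OreLocalization.OreSet (Submonoid.powers z) where
  ore_right_cancel _ _ _ h := ⟨1, by rw [mul_right_cancel h]⟩
  oreNum r _ := r
  oreDenom _ s := s
  ore_eq r s := (Submonoid.mem_center_iff.1 (Submonoid.powers_le.2 hz s.2) r).symm

/-- A central element of a monoid is cofinal if every element divides one of its powers. A
cancellative monoid with such an element `z` embeds into its group of fractions, obtained by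
inverting `z` alone. -/
structure IsCentralCofinal {M : Type*} [Monoid M] (z : M) : Prop where
  mem_center : z ∈ Submonoid.center M
  exists_dvd_pow : ∀ x, ∃ k : ℕ, x ∣ z ^ k

namespace IsCentralCofinal

theorem exists_injective_monoidHom.{u} {M : Type u} [Monoid M] [IsCancelMul M] {z : M}
    (hz : IsCentralCofinal z) :
    ∃ (G : Type u) (_ : Group G) (f : M →* G), Function.Injective f := by
  let _ := oreSetPowers hz.mem_center
  let num : M →* OreLocalization (Submonoid.powers z) M := OreLocalization.numeratorHom
  have num_injective : Function.Injective num := by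
    intro x y h
    obtain ⟨u, v, hxy, huv⟩ := OreLocalization.oreDiv_eq_iff.1 h
    rw [Submonoid.coe_one, mul_one, mul_one] at huv
    rw [Submonoid.smul_def, smul_eq_mul, smul_eq_mul, huv] at hxy
    exact (mul_left_cancel hxy).symm
  have isUnit_num (x : M) : IsUnit (num x) := by
    obtain ⟨k, y, hk⟩ := hz.exists_dvd_pow x
    have hcentral := Submonoid.mem_center_iff.1 (pow_mem hz.mem_center k)
    have hxy : Commute x y := mul_left_cancel (a := x) <| by
      rw [← hk, hcentral, hk, mul_assoc]
    refine ((hxy.map num).isUnit_mul_iff.1 ?_).1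
    rw [← map_mul, ← hk]
    exact OreLocalization.numerator_isUnit (⟨z ^ k, k, rfl⟩ : Submonoid.powers z)
  let numUnits : M →* (OreLocalization (Submonoid.powers z) M)ˣ :=
    Units.liftRight num (fun x => (isUnit_num x).unit) fun _ => rfl
  exact ⟨_, inferInstance, numUnits, fun x y h => num_injective (congrArg Units.val h)⟩

section Fractions

variable {M G : Type*} [Monoid M] [Group G] {z : M} {ι : M →* G}

theorem map_mem_center (hz : IsCentralCofinal z) (hι : Subgroup.closure (Set.range ι) = ⊤) :
    ι z ∈ Subgroup.center G := by
  rw [← Subgroup.centralizer_univ, ← Subgroup.coe_top, ← hι, Subgroup.centralizer_closure]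
  rintro _ ⟨x, rfl⟩
  rw [← map_mul, ← map_mul, Submonoid.mem_center_iff.1 hz.mem_center]

theorem exists_eq_map_mul_zpow (hz : IsCentralCofinal z)
    (hι : Subgroup.closure (Set.range ι) = ⊤) (g : G) : ∃ x, ∃ k : ℤ, g = ι x * ι z ^ k := by
  have zpow_comm (k : ℤ) (h : G) : h * ι z ^ k = ι z ^ k * h :=
    Subgroup.mem_center_iff.1 (zpow_mem (hz.map_mem_center hι) k) h
  have hg : g ∈ Subgroup.closure (Set.range ι) := hι ▸ Subgroup.mem_top g
  induction hg using Subgroup.closure_induction with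
  | mem g hg =>
    obtain ⟨x, rfl⟩ := hg
    exact ⟨x, 0, by rw [zpow_zero, mul_one]⟩
  | one => exact ⟨1, 0, by rw [map_one, zpow_zero, mul_one]⟩
  | mul g h _ _ ihg ihh =>
    obtain ⟨x, k, rfl⟩ := ihg
    obtain ⟨y, l, rfl⟩ := ihh
    refine ⟨x * y, k + l, ?_⟩
    rw [map_mul, zpow_add, mul_assoc, ← mul_assoc (ι z ^ k), ← zpow_comm]
    simp only [mul_assoc]
  | inv g _ ih =>
    obtain ⟨x, k, rfl⟩ := ih
    obtain ⟨l, y, hl⟩ := hz.exists_dvd_pow x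
    have hxy : ι x * ι y = ι z ^ (l : ℤ) := by rw [← map_mul, ← hl, map_pow, zpow_natCast]
    refine ⟨y, -l + -k, inv_eq_of_mul_eq_one_right ?_⟩
    rw [zpow_comm, mul_assoc, ← mul_assoc (ι x), hxy, ← zpow_add, ← zpow_add, add_neg_cancel_left,
      add_neg_cancel, zpow_zero]

theorem center_eq_zpowers (hz : IsCentralCofinal z) (hι : Subgroup.closure (Set.range ι) = ⊤)
    (hinj : Function.Injective ι) (hM : Submonoid.center M ≤ Submonoid.powers z) :
    Subgroup.center G = Subgroup.zpowers (ι z) := by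
  refine le_antisymm (fun g hg => ?_) (Subgroup.zpowers_le.2 (hz.map_mem_center hι))
  obtain ⟨x, k, rfl⟩ := hz.exists_eq_map_mul_zpow hι g
  have hιx : ι x ∈ Subgroup.center G :=
    (Subgroup.mul_mem_cancel_right _ (zpow_mem (hz.map_mem_center hι) k)).1 hg
  have hx : x ∈ Submonoid.center M := Submonoid.mem_center_iff.2 fun y =>
    hinj (by rw [map_mul, map_mul, Subgroup.mem_center_iff.1 hιx])
  obtain ⟨l, rfl⟩ := hM hx
  exact mul_mem (map_pow ι z l ▸ pow_mem (Subgroup.mem_zpowers _) l) (zpow_mem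
    (Subgroup.mem_zpowers _) k)

end Fractions

end IsCentralCofinal

/-- The first `m` terms of a sequence in a monoid satisfy the relations of the standard generators
of the braid group on `m + 1` strands. -/
structure IsBraidSeq {M : Type*} [Monoid M] (s : ℕ → M) (m : ℕ) : Prop where
  commute : ∀ {i j}, i + 1 < j → j < m → Commute (s i) (s j)
  braid : ∀ {i}, i + 1 < m → s i * s (i + 1) * s i = s (i + 1) * s i * s (i + 1)

namespace IsBraidSeq

variable {M : Type*} [Monoid M] {s : ℕ → M} {m : ℕ}

/-- The ascending product `s 0 * s 1 * ⋯ * s (k - 1)`. -/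
def ascProd (s : ℕ → M) (k : ℕ) : M := ((List.range k).map s).prod

/-- The descending product `s (k - 1) * ⋯ * s 1 * s 0`. -/
def descProd (s : ℕ → M) : ℕ → M
  | 0 => 1
  | k + 1 => s k * descProd s k

/-- Garside's half twist on the first `k + 1` strands, `s 0 * (s 1 * s 0) * (s 2 * s 1 * s 0) * ⋯`
with `k` factors. -/
def halfTwist (s : ℕ → M) : ℕ → M
  | 0 => 1
  | k + 1 => halfTwist s k * descProd s (k + 1)

theorem ascProd_succ (s : ℕ → M) (k : ℕ) : ascProd s (k + 1) = ascProd s k * s k :=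
  List.prod_range_succ s k

theorem ascProd_succ' (s : ℕ → M) (k : ℕ) :
    ascProd s (k + 1) = s 0 * ascProd (fun i => s (i + 1)) k :=
  List.prod_range_succ' s k

theorem mem_closure_of_lt (s : ℕ → M) {i k : ℕ} (h : i < k) :
    s i ∈ Submonoid.closure (s '' Set.Iio k) :=
  Submonoid.subset_closure ⟨i, h, rfl⟩

theorem ascProd_mem_closure (s : ℕ → M) (k : ℕ) :
    ascProd s k ∈ Submonoid.closure (s '' Set.Iio k) := by
  refine Submonoid.list_prod_mem _ fun x hx => ?_
  obtain ⟨i, hi, rfl⟩ := List.mem_map.1 hx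
  exact mem_closure_of_lt s (List.mem_range.1 hi)

theorem descProd_mem_closure (s : ℕ → M) {j k : ℕ} (h : j ≤ k) :
    descProd s j ∈ Submonoid.closure (s '' Set.Iio k) := by
  induction j with
  | zero => exact one_mem _
  | succ j ih => exact mul_mem (mem_closure_of_lt s h) (ih (by omega))

theorem halfTwist_mem_closure (s : ℕ → M) {j k : ℕ} (h : j ≤ k) :
    halfTwist s j ∈ Submonoid.closure (s '' Set.Iio k) := by
  induction j with
  | zero => exact one_mem _
  | succ j ih => exact mul_mem (ih (by omega)) (descProd_mem_closure s h)

theorem commute_of_mem_closure (hs : IsBraidSeq s m) {j k : ℕ} (hkj : k < j) (hj : j < m) {x : M}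
    (hx : x ∈ Submonoid.closure (s '' Set.Iio k)) : Commute x (s j) := by
  induction hx using Submonoid.closure_induction with
  | mem x hx =>
    obtain ⟨i, hi, rfl⟩ := hx
    exact hs.commute (by rw [Set.mem_Iio] at hi; omega) hj
  | one => exact .one_left _
  | mul x y _ _ ihx ihy => exact ihx.mul_left ihy

theorem semiconjBy_ascProd (hs : IsBraidSeq s m) {i k : ℕ} (hik : i + 2 ≤ k) (hk : k ≤ m) :
    SemiconjBy (ascProd s k) (s i) (s (i + 1)) := by
  induction k, hik using Nat.le_induction with
  | base =>
    have hbraid : SemiconjBy (s i * s (i + 1)) (s i) (s (i + 1)) :=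
      (hs.braid (by omega)).trans (mul_assoc ..)
    have hcomm : Commute (ascProd s i) (s (i + 1)) :=
      hs.commute_of_mem_closure i.lt_succ_self (by omega) (ascProd_mem_closure s i)
    rw [ascProd_succ, ascProd_succ, mul_assoc]
    exact SemiconjBy.mul_left hcomm hbraid
  | succ k hik ih =>
    rw [ascProd_succ]
    exact (ih (by omega)).mul_left (hs.commute (by omega) (by omega)).symm

theorem semiconjBy_ascProd_ascProd (hs : IsBraidSeq s m) {k : ℕ} (hk : k + 1 ≤ m) :
    SemiconjBy (ascProd s m) (ascProd s k) (ascProd (fun i => s (i + 1)) k) := by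
  induction k with
  | zero => exact .one_right _
  | succ k ih =>
    rw [ascProd_succ, ascProd_succ]
    exact (ih (by omega)).mul_right (hs.semiconjBy_ascProd (by omega) le_rfl)

theorem semiconjBy_ascProd_sq {p : ℕ} (hs : IsBraidSeq s (p + 1)) :
    SemiconjBy (ascProd s (p + 1) ^ 2) (s p) (s 0) := by
  have hsq : ascProd s (p + 1) ^ 2 =
      ascProd (fun i => s (i + 1)) p * ascProd s (p + 1) * s p := by
    rw [← hs.semiconjBy_ascProd_ascProd le_rfl, mul_assoc, ← ascProd_succ, sq]
  calc ascProd s (p + 1) ^ 2 * s p = ascProd s (p + 1) * ascProd s (p + 1) * s p := by rw [sq]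
    _ = s 0 * (ascProd (fun i => s (i + 1)) p * ascProd s (p + 1) * s p) := by
      nth_rw 1 [ascProd_succ']
      simp only [mul_assoc]
    _ = s 0 * ascProd s (p + 1) ^ 2 := by rw [hsq]

theorem semiconjBy_ascProd_pow (hs : IsBraidSeq s m) {i j : ℕ} (h : i + j < m) :
    SemiconjBy (ascProd s m ^ j) (s i) (s (i + j)) := by
  induction j with
  | zero =>
    rw [pow_zero]
    exact .one_left _
  | succ j ih =>
    rw [pow_succ', ← add_assoc]
    exact (hs.semiconjBy_ascProd (by omega) le_rfl).mul_left (ih (by omega))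

theorem commute_ascProd_pow (hs : IsBraidSeq s m) {i : ℕ} (hi : i < m) :
    Commute (ascProd s m ^ (m + 1)) (s i) := by
  obtain ⟨d, rfl⟩ := Nat.exists_eq_add_of_lt hi
  have hfirst := hs.semiconjBy_ascProd_pow (i := i) (j := d) (by omega)
  have hlast := hs.semiconjBy_ascProd_pow (i := 0) (j := i) (by omega)
  rw [zero_add] at hlast
  rw [show i + d + 1 + 1 = i + 2 + d by omega, pow_add, pow_add]
  exact (hlast.mul_left hs.semiconjBy_ascProd_sq).mul_left hfirst

theorem dvd_descProd_mul_descProd (hs : IsBraidSeq s m) {k : ℕ} (hk : k < m) :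
    s k ∣ descProd s k * descProd s (k + 1) := by
  induction k with
  | zero => exact ⟨1, by simp [descProd]⟩
  | succ k ih =>
    obtain ⟨w, hw⟩ := ih (by omega)
    have hcomm : Commute (descProd s k) (s (k + 1)) :=
      hs.commute_of_mem_closure k.lt_succ_self hk (descProd_mem_closure s le_rfl)
    refine ⟨s k * s (k + 1) * w, ?_⟩
    calc descProd s (k + 1) * descProd s (k + 2)
        = s k * (descProd s k * s (k + 1)) * descProd s (k + 1) := by
          simp only [descProd, mul_assoc]
      _ = s k * s (k + 1) * (descProd s k * descProd s (k + 1)) := by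
          rw [hcomm]
          simp only [mul_assoc]
      _ = s k * s (k + 1) * s k * w := by rw [hw, mul_assoc _ (s k) w]
      _ = s (k + 1) * (s k * s (k + 1) * w) := by
          rw [hs.braid hk]
          simp only [mul_assoc]

theorem dvd_halfTwist (hs : IsBraidSeq s m) {j k : ℕ} (hjk : j < k) (hk : k ≤ m) :
    s j ∣ halfTwist s k := by
  induction k, hjk using Nat.le_induction with
  | base =>
    rcases j with _ | j
    · exact ⟨1, by simp [halfTwist, descProd]⟩
    · obtain ⟨w, hw⟩ := hs.dvd_descProd_mul_descProd hk
      have hcomm : Commute (halfTwist s j) (s (j + 1)) :=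
        hs.commute_of_mem_closure j.lt_succ_self hk (halfTwist_mem_closure s le_rfl)
      exact ⟨halfTwist s j * w, by rw [halfTwist, halfTwist, mul_assoc, hw, hcomm.left_comm]⟩
  | succ k _ ih => exact (ih (by omega)).mul_right _

theorem semiconjBy_descProd (hs : IsBraidSeq s m) {k : ℕ} (hk : k + 1 < m) :
    SemiconjBy (descProd s (k + 2)) (s (k + 1)) (s k) := by
  have hbraid : SemiconjBy (s (k + 1) * s k) (s (k + 1)) (s k) :=
    (hs.braid hk).symm.trans (mul_assoc ..)
  rw [descProd, descProd, ← mul_assoc]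
  exact hbraid.mul_left
    (hs.commute_of_mem_closure k.lt_succ_self hk (descProd_mem_closure s le_rfl))

theorem semiconjBy_halfTwist (hs : IsBraidSeq s m) {k : ℕ} (hk : k < m) :
    SemiconjBy (halfTwist s (k + 1)) (s k) (s 0) := by
  induction k with
  | zero => simp [halfTwist, descProd, SemiconjBy]
  | succ k ih => exact (ih (by omega)).mul_left (hs.semiconjBy_descProd hk)

end IsBraidSeq

instance (m : ℕ) : Fact ((SimpleGraph.pathGraph m).CliqueFree 3) :=
  ⟨SimpleGraph.cliqueFree_hasse_three⟩

/-- The monoid of positive braids on `m + 1` strands. -/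
abbrev PositiveBraidMonoid (m : ℕ) : Type := ArtinMonoid (SimpleGraph.pathGraph m)

namespace PositiveBraidMonoid

open SimpleGraph ArtinMonoid IsBraidSeq

/-- The generators of the positive braid monoid as an infinite sequence, with the junk value `1`
from index `m` on. -/
def braidGen (m k : ℕ) : PositiveBraidMonoid m := if h : k < m then gen ⟨k, h⟩ else 1

variable {m j k : ℕ} {x y : PositiveBraidMonoid m}

theorem braidGen_of_lt (h : k < m) : braidGen m k = gen ⟨k, h⟩ := dif_pos h

theorem compl_pathGraph_adj {i j : Fin m} (h : (i : ℕ) + 1 < j) : (pathGraph m)ᶜ.Adj i j := by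
  rw [compl_adj, pathGraph_adj, Ne, Fin.ext_iff]
  omega

theorem isBraidSeq_braidGen (m : ℕ) : IsBraidSeq (braidGen m) m where
  commute {i j} hij hj := by
    have hi : i < m := by omega
    have h := gen_comm (compl_pathGraph_adj (i := ⟨i, hi⟩) (j := ⟨j, hj⟩) hij) 1
    simpa only [Commute, SemiconjBy, braidGen_of_lt hi, braidGen_of_lt hj, mul_one] using h
  braid {i} hi := by
    have hadj : (pathGraph m).Adj ⟨i, by omega⟩ ⟨i + 1, hi⟩ := pathGraph_adj.2 (.inl rfl)
    have h := gen_braid hadj 1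
    simpa only [braidGen_of_lt hi, braidGen_of_lt (Nat.lt_of_succ_lt hi), mul_one, mul_assoc]
      using h

theorem length_braidGen (h : k < m) : (braidGen m k).length = 1 := by
  rw [braidGen_of_lt h, length_gen]

theorem length_ascProd (hk : k ≤ m) : (ascProd (braidGen m) k).length = k := by
  induction k with
  | zero => exact length_one
  | succ k ih => rw [ascProd_succ, length_mul, ih (by omega), length_braidGen (by omega)]

theorem length_descProd (hk : k ≤ m) : (descProd (braidGen m) k).length = k := by
  induction k with
  | zero => exact length_one
  | succ k ih => rw [descProd, length_mul, ih (by omega), length_braidGen (by omega), add_comm]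

theorem two_mul_length_halfTwist (hk : k ≤ m) :
    2 * (halfTwist (braidGen m) k).length = k * (k + 1) := by
  induction k with
  | zero => rw [halfTwist, length_one, mul_zero, zero_mul]
  | succ k ih =>
    rw [halfTwist, length_mul, length_descProd hk, mul_add, ih (by omega)]
    ring

theorem braidGen_dvd_of_dvd_mul (hkj : k < j) (hj : j < m)
    (hx : x ∈ Submonoid.closure (braidGen m '' Set.Iio k)) (h : braidGen m j ∣ x * y) :
    braidGen m j ∣ y := by
  have hle : braidGen m '' Set.Iio k ⊆ gen '' {a | (pathGraph m)ᶜ.Adj a ⟨j, hj⟩} := by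
    rintro _ ⟨i, hi, rfl⟩
    rw [Set.mem_Iio] at hi
    rw [braidGen_of_lt (by omega : i < m)]
    exact ⟨_, compl_pathGraph_adj (by simp only; omega), rfl⟩
  rw [braidGen_of_lt hj] at h ⊢
  exact gen_dvd_of_gen_dvd_mul (Submonoid.closure_mono hle hx) h

theorem descProd_dvd_of_dvd_descProd_mul (hk : k < m)
    (h : braidGen m k ∣ descProd (braidGen m) k * y) : descProd (braidGen m) (k + 1) ∣ y := by
  induction k generalizing y with
  | zero => simpa [descProd] using h
  | succ k ih =>
    have hdesc := descProd_mem_closure (braidGen m) (le_refl k)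
    have hadj : (pathGraph m).Adj ⟨k, by omega⟩ ⟨k + 1, hk⟩ := pathGraph_adj.2 (.inl rfl)
    obtain ⟨t, ht⟩ := h
    rw [descProd, mul_assoc, braidGen_of_lt hk, braidGen_of_lt (Nat.lt_of_succ_lt hk)] at ht
    obtain ⟨v, hv, -⟩ := (headRel_of_gen_mul_eq_gen_mul ht).exists_of_adj hadj
    rw [← braidGen_of_lt hk, ← braidGen_of_lt (Nat.lt_of_succ_lt hk)] at hv
    obtain ⟨y, rfl⟩ := braidGen_dvd_of_dvd_mul k.lt_add_one hk hdesc ⟨_, hv⟩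
    have hcomm := (isBraidSeq_braidGen m).commute_of_mem_closure k.lt_add_one hk hdesc
    rw [hcomm.left_comm] at hv
    obtain ⟨y, rfl⟩ := ih (by omega) ⟨v, mul_left_cancel hv⟩
    exact ⟨y, (mul_assoc ..).symm⟩

theorem halfTwist_dvd (hk : k ≤ m) (h : ∀ j < k, braidGen m j ∣ x) :
    halfTwist (braidGen m) k ∣ x := by
  induction k with
  | zero => exact one_dvd x
  | succ k ih =>
    obtain ⟨y, rfl⟩ := ih (by omega) fun j hj => h j (by omega)
    refine mul_dvd_mul_left _ (descProd_dvd_of_dvd_descProd_mul hk ?_)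
    have hkx := h k k.lt_add_one
    rcases k with _ | k
    · exact hkx
    · rw [halfTwist, mul_assoc] at hkx
      exact braidGen_dvd_of_dvd_mul k.lt_add_one hk (halfTwist_mem_closure _ le_rfl) hkx

theorem isGarside_halfTwist (m : ℕ) : IsGarside (halfTwist (braidGen m) m) where
  gen_dvd a := by
    rw [← braidGen_of_lt a.2]
    exact (isBraidSeq_braidGen m).dvd_halfTwist a.2 le_rfl
  dvd_of_forall_gen_dvd h := halfTwist_dvd le_rfl fun j hj => by
    rw [braidGen_of_lt hj]
    exact h _

/-- The full twist in the positive braid monoid on `m + 1` strands. -/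
def posFullTwist (m : ℕ) : PositiveBraidMonoid m := ascProd (braidGen m) m ^ (m + 1)

theorem length_posFullTwist (m : ℕ) : (posFullTwist m).length = (m + 1) * m := by
  rw [posFullTwist, length_pow, length_ascProd le_rfl]

theorem posFullTwist_mem_center (m : ℕ) :
    posFullTwist m ∈ Submonoid.center (PositiveBraidMonoid m) := by
  refine mem_center_of_commute_gen fun a => ?_
  rw [← braidGen_of_lt a.2]
  exact (isBraidSeq_braidGen m).commute_ascProd_pow a.2

theorem gen_dvd_posFullTwist (a : Fin m) : gen a ∣ posFullTwist m := by
  refine (isQuasicentral_of_mem_center (posFullTwist_mem_center m)).gen_dvd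
    (pathGraph_preconnected m) (fun h => ?_) a
  have hlen := congrArg length h
  rw [length_posFullTwist, length_one] at hlen
  exact absurd hlen (Nat.mul_ne_zero m.succ_ne_zero a.pos.ne')

theorem isCentralCofinal_posFullTwist (m : ℕ) : IsCentralCofinal (posFullTwist m) where
  mem_center := posFullTwist_mem_center m
  exists_dvd_pow x := by
    induction x using gen_mul_induction with
    | one => exact ⟨0, one_dvd _⟩
    | gen_mul a y ih =>
      obtain ⟨k, w, hk⟩ := ih
      obtain ⟨v, hv⟩ := gen_dvd_posFullTwist a
      have hcomm := Submonoid.mem_center_iff.1 (pow_mem (posFullTwist_mem_center m) k) (gen a)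
      exact ⟨k + 1, w * v, by
        rw [mul_assoc, ← mul_assoc y, ← hk, ← mul_assoc, hcomm, mul_assoc, ← hv, pow_succ]⟩

theorem posFullTwist_eq_halfTwist_sq (m : ℕ) :
    posFullTwist m = halfTwist (braidGen m) m ^ 2 := by
  obtain ⟨k, hk⟩ := (isGarside_halfTwist m).exists_eq_pow (pathGraph_preconnected m)
    (isQuasicentral_of_mem_center (posFullTwist_mem_center m))
  have hlen : k * (halfTwist (braidGen m) m).length = 2 * (halfTwist (braidGen m) m).length := by
    rw [two_mul_length_halfTwist le_rfl, ← length_pow, ← hk, length_posFullTwist, mul_comm]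
  rcases mul_eq_mul_right_iff.1 hlen with rfl | hzero
  · exact hk
  · rw [hk, eq_one_of_length_eq_zero hzero, one_pow, one_pow]

theorem center_le_powers_posFullTwist (hm : 2 ≤ m) :
    Submonoid.center (PositiveBraidMonoid m) ≤ Submonoid.powers (posFullTwist m) := by
  intro x hx
  obtain ⟨k, rfl⟩ := (isGarside_halfTwist m).exists_eq_pow (pathGraph_preconnected m)
    (isQuasicentral_of_mem_center hx)
  rcases Nat.even_or_odd' k with ⟨l, rfl | rfl⟩
  · exact ⟨l, by simp only [posFullTwist_eq_halfTwist_sq, pow_mul]⟩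
  · obtain ⟨p, rfl⟩ : ∃ p, m = p + 2 := ⟨m - 2, by omega⟩
    rw [pow_succ, pow_mul, ← posFullTwist_eq_halfTwist_sq] at hx
    have hsemi : SemiconjBy (posFullTwist (p + 2) ^ l * halfTwist (braidGen (p + 2)) (p + 2))
        (braidGen (p + 2) (p + 1)) (braidGen (p + 2) 0) :=
      .mul_left (Submonoid.mem_center_iff.1 (pow_mem (posFullTwist_mem_center _) l) _).symm
        ((isBraidSeq_braidGen (p + 2)).semiconjBy_halfTwist (by omega))
    have heq : braidGen (p + 2) (p + 1) = braidGen (p + 2) 0 :=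
      mul_right_cancel ((Submonoid.mem_center_iff.1 hx _).trans hsemi)
    rw [braidGen_of_lt (by omega), braidGen_of_lt (by omega)] at heq
    exact absurd (Fin.ext_iff.1 (gen_injective heq)) p.succ_ne_zero

theorem of_braid {i j : Fin m} (h : (i : ℕ) + 1 = j) :
    (.of i * .of j * .of i : PresentedGroup (braidRels m)) = .of j * .of i * .of j :=
  PresentedGroup.mk_eq_mk_of_mul_inv_mem (.inl ⟨i, j, h.symm, rfl⟩)

theorem of_comm {i j : Fin m} (h : (i : ℕ) + 1 < j) :
    (.of i * .of j : PresentedGroup (braidRels m)) = .of j * .of i :=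
  PresentedGroup.mk_eq_mk_of_mul_inv_mem (.inr ⟨i, j, h, rfl⟩)

/-- The canonical map from the positive braid monoid to the braid group. -/
def toBraidGroup (m : ℕ) : PositiveBraidMonoid m →* PresentedGroup (braidRels m) :=
  PresentedMonoid.lift .of <| by
    rintro _ _ (⟨h⟩ | ⟨h⟩)
    · rcases pathGraph_adj.1 h with h | h
      · simpa using of_braid h
      · simpa using (of_braid h).symm
    · rename_i a b
      rw [compl_adj, pathGraph_adj, Ne, Fin.ext_iff] at h
      rcases (by omega : (a : ℕ) + 1 < b ∨ (b : ℕ) + 1 < a) with h | h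
      · simpa using of_comm h
      · simpa using (of_comm h).symm

theorem closure_range_toBraidGroup (m : ℕ) :
    Subgroup.closure (Set.range (toBraidGroup m)) = ⊤ := by
  refine top_le_iff.1 ((PresentedGroup.closure_range_of (braidRels m)).ge.trans ?_)
  exact Subgroup.closure_mono (Set.range_subset_iff.2 fun a => ⟨gen a, rfl⟩)

theorem exists_comp_toBraidGroup_eq {G : Type*} [Group G] (f : PositiveBraidMonoid m →* G) :
    ∃ F : PresentedGroup (braidRels m) →* G, F.comp (toBraidGroup m) = f := by
  have hrels : ∀ r ∈ braidRels m, FreeGroup.lift (fun i => f (gen i)) r = 1 := by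
    rintro _ (⟨i, j, hij, rfl⟩ | ⟨i, j, hij, rfl⟩)
    · have h := congrArg f (gen_braid (pathGraph_adj.2 (.inl hij.symm)) 1)
      rw [map_mul, map_inv, mul_inv_eq_one]
      simpa [mul_assoc] using h
    · have h := congrArg f (gen_comm (compl_pathGraph_adj hij) 1)
      rw [map_mul, map_inv, mul_inv_eq_one]
      simpa using h
  exact ⟨PresentedGroup.toGroup hrels,
    PresentedMonoid.ext _ fun i => PresentedGroup.toGroup.of hrels⟩

theorem toBraidGroup_injective (m : ℕ) : Function.Injective (toBraidGroup m) := by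
  obtain ⟨G, _, f, hf⟩ := (isCentralCofinal_posFullTwist m).exists_injective_monoidHom
  obtain ⟨F, rfl⟩ := exists_comp_toBraidGroup_eq f
  exact .of_comp hf

theorem toBraidGroup_posFullTwist (m : ℕ) :
    toBraidGroup m (posFullTwist m) = fullTwist (m + 1) := by
  have hgen : (toBraidGroup m ∘ braidGen m) ∘ (fun a : Fin m => (a : ℕ)) = σ (n := m + 1) :=
    funext fun a => congrArg (toBraidGroup m) (braidGen_of_lt a.2)
  rw [posFullTwist, fullTwist, map_pow, ascProd, map_list_prod, List.map_map,
    ← List.map_coe_finRange_eq_range, List.map_map, hgen, List.ofFn_eq_map]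
  rfl

end PositiveBraidMonoid

section Retraction

variable {G : Type*} [Group G] {K Z : Subgroup G} [Z.Normal]

variable (Z) in
theorem finiteIndex_map_mk' [hK : K.FiniteIndex] :
    (K.map (QuotientGroup.mk' Z)).FiniteIndex :=
  ⟨ne_zero_of_dvd_ne_zero hK.index_ne_zero
    (K.index_map_dvd (QuotientGroup.mk'_surjective Z))⟩

theorem bijective_subgroupMap_mk'_prod_of_retraction (hZK : Z ≤ K) {r : K →* Z}
    (hr : ∀ z : Z, r (Subgroup.inclusion hZK z) = z) :
    Function.Bijective (((QuotientGroup.mk' Z).subgroupMap K).prod r) := by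
  constructor
  · rw [injective_iff_map_eq_one]
    intro g hg
    obtain ⟨hgK, hgr⟩ := Prod.mk.inj hg
    have hgZ : (g : G) ∈ Z := (QuotientGroup.eq_one_iff _).1 (congrArg Subtype.val hgK)
    have hg1 : (⟨g, hgZ⟩ : Z) = 1 := (hr ⟨g, hgZ⟩).symm.trans hgr
    exact Subtype.ext (congrArg (fun z : Z => (z : G)) hg1)
  · rintro ⟨⟨_, g, hg, rfl⟩, z⟩
    -- Correct the lift `g` by an element of `Z`, which does not change its class.
    refine ⟨⟨g, hg⟩ * Subgroup.inclusion hZK ((r ⟨g, hg⟩)⁻¹ * z), Prod.ext (Subtype.ext ?_) ?_⟩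
    · exact QuotientGroup.mk_mul_of_mem g ((r ⟨g, hg⟩)⁻¹ * z).2
    · simp [hr]

/-- A retraction of `K` onto a normal subgroup `Z` identifies `K` with `(K / Z) × Z`; the quotient
`K / Z` is encoded as the image of `K` in `G ⧸ Z`. -/
noncomputable def mulEquivProdOfRetraction (hZK : Z ≤ K) (r : K →* Z)
    (hr : ∀ z : Z, r (Subgroup.inclusion hZK z) = z) :
    K ≃* K.map (QuotientGroup.mk' Z) × Z :=
  .ofBijective _ (bijective_subgroupMap_mk'_prod_of_retraction hZK hr)

end Retraction

namespace BraidGroup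

open PositiveBraidMonoid

variable {n : ℕ}

theorem fullTwist_mem_center (n : ℕ) : fullTwist n ∈ Subgroup.center (BraidGroup n) := by
  rcases n with _ | m
  · exact one_mem _
  · rw [← toBraidGroup_posFullTwist]
    exact (isCentralCofinal_posFullTwist m).map_mem_center (closure_range_toBraidGroup m)

theorem center_eq_zpowers_fullTwist (hn : 3 ≤ n) :
    Subgroup.center (BraidGroup n) = Subgroup.zpowers (fullTwist n) := by
  obtain ⟨m, rfl⟩ : ∃ m, n = m + 1 := ⟨n - 1, by omega⟩
  rw [← toBraidGroup_posFullTwist]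
  exact (isCentralCofinal_posFullTwist m).center_eq_zpowers
    (closure_range_toBraidGroup m) (toBraidGroup_injective m)
    (center_le_powers_posFullTwist (by omega))

theorem toAdd_lengthHom_fullTwist (n : ℕ) :
    (lengthHom n (fullTwist n)).toAdd = (n : ℤ) * ((n : ℤ) - 1) := by
  have hσ : lengthHom n ∘ σ = fun _ => Multiplicative.ofAdd (1 : ℤ) :=
    funext fun i => PresentedGroup.toGroup.of _
  rw [fullTwist, map_pow, map_list_prod, List.map_ofFn, hσ, List.ofFn_const, List.prod_replicate]
  rcases n with _ | m <;> simp

theorem toAdd_lengthHom_fullTwist_zpow (n : ℕ) (k : ℤ) :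
    (lengthHom n (fullTwist n ^ k)).toAdd = k * ((n : ℤ) * ((n : ℤ) - 1)) := by
  rw [map_zpow, toAdd_zpow, toAdd_lengthHom_fullTwist, smul_eq_mul]

theorem mem_lengthKer_iff {g : BraidGroup n} :
    g ∈ lengthKer n ↔ (n : ℤ) * ((n : ℤ) - 1) ∣ (lengthHom n g).toAdd := by
  have hcast : (n : ℤ) * ((n : ℤ) - 1) = (n * (n - 1) : ℕ) := by rcases n with _ | m <;> simp
  rw [hcast, ← ZMod.intCast_zmod_eq_zero_iff_dvd]
  exact MonoidHom.mem_ker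

/-- The homomorphism `g ↦ z ^ (L(g) / n(n-1))` on `K = lengthKer n`, where `z` is the full twist. -/
noncomputable def lengthKerRetraction (n : ℕ) : lengthKer n →* BraidGroup n where
  toFun g := fullTwist n ^ ((lengthHom n g).toAdd / ((n : ℤ) * ((n : ℤ) - 1)))
  map_one' := by simp
  map_mul' g h := by
    rw [← zpow_add, Subgroup.coe_mul, map_mul, toAdd_mul,
      Int.add_ediv_of_dvd_left (mem_lengthKer_iff.1 g.2)]

theorem int_mul_sub_one_ne_zero (hn : 2 ≤ n) : (n : ℤ) * ((n : ℤ) - 1) ≠ 0 :=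
  mul_ne_zero (by omega) (by omega)

theorem finiteIndex_lengthKer (hn : 2 ≤ n) : (lengthKer n).FiniteIndex := by
  have : NeZero (n * (n - 1)) := ⟨Nat.mul_ne_zero (by omega) (by omega)⟩
  have : Finite (Multiplicative (ZMod (n * (n - 1)))) :=
    inferInstanceAs (Finite (ZMod (n * (n - 1))))
  exact Subgroup.finiteIndex_ker _

theorem center_le_lengthKer (hn : 3 ≤ n) : Subgroup.center (BraidGroup n) ≤ lengthKer n := by
  rw [center_eq_zpowers_fullTwist hn, Subgroup.zpowers_le, mem_lengthKer_iff,
    toAdd_lengthHom_fullTwist]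

theorem lengthKerRetraction_mem_center (g : lengthKer n) :
    lengthKerRetraction n g ∈ Subgroup.center (BraidGroup n) :=
  zpow_mem (fullTwist_mem_center n) _

theorem lengthKerRetraction_of_mem_center (hn : 3 ≤ n) {g : lengthKer n}
    (hg : (g : BraidGroup n) ∈ Subgroup.center (BraidGroup n)) :
    lengthKerRetraction n g = g := by
  rw [center_eq_zpowers_fullTwist hn] at hg
  obtain ⟨k, hk⟩ := Subgroup.mem_zpowers_iff.1 hg
  change fullTwist n ^ ((lengthHom n g).toAdd / _) = _
  rw [← hk, toAdd_lengthHom_fullTwist_zpow,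
    Int.mul_ediv_cancel _ (int_mul_sub_one_ne_zero (by omega))]

theorem not_isOfFinOrder_fullTwist (hn : 2 ≤ n) : ¬IsOfFinOrder (fullTwist n) := by
  rw [← injective_zpow_iff_not_isOfFinOrder]
  intro k l hkl
  have hlen := congrArg (fun g => (lengthHom n g).toAdd) hkl
  simp only [toAdd_lengthHom_fullTwist_zpow] at hlen
  exact mul_right_cancel₀ (int_mul_sub_one_ne_zero hn) hlen

theorem nonempty_center_mulEquiv_int (hn : 3 ≤ n) :
    Nonempty (Subgroup.center (BraidGroup n) ≃* Multiplicative ℤ) := by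
  have : Infinite (Subgroup.zpowers (fullTwist n)) :=
    (infinite_zpowers.2 (not_isOfFinOrder_fullTwist (by omega))).to_subtype
  exact ⟨(MulEquiv.subgroupCongr (center_eq_zpowers_fullTwist hn)).trans intCyclicMulEquiv.symm⟩

theorem nonempty_lengthKer_mulEquiv_prod_center (hn : 3 ≤ n) :
    Nonempty (lengthKer n ≃* (lengthKer n).map (QuotientGroup.mk' (Subgroup.center (BraidGroup n)))
      × Subgroup.center (BraidGroup n)) :=
  ⟨mulEquivProdOfRetraction (center_le_lengthKer hn)
    ((lengthKerRetraction n).codRestrict _ lengthKerRetraction_mem_center)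
    fun z => Subtype.ext (lengthKerRetraction_of_mem_center hn z.2)⟩

end BraidGroup

open BraidGroup in
theorem braid_commensurable_with_product_general (n : ℕ) (hn : 3 ≤ n) :
    (lengthKer n).FiniteIndex ∧
      Subgroup.center (BraidGroup n) ≤ lengthKer n ∧
      (∃ s : lengthKer n →* BraidGroup n,
        (∀ g : lengthKer n,
          s g = fullTwist n ^
            (Multiplicative.toAdd (lengthHom n (g : BraidGroup n)) / ((n : ℤ) * ((n : ℤ) - 1)))) ∧
        (∀ g : lengthKer n, s g ∈ Subgroup.center (BraidGroup n)) ∧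
        (∀ g : lengthKer n,
          (g : BraidGroup n) ∈ Subgroup.center (BraidGroup n) → s g = (g : BraidGroup n))) ∧
      Nonempty ((lengthKer n) ≃*
        (Subgroup.map (QuotientGroup.mk' (Subgroup.center (BraidGroup n))) (lengthKer n)) ×
          (Subgroup.center (BraidGroup n))) ∧
      (Subgroup.map (QuotientGroup.mk' (Subgroup.center (BraidGroup n)))
        (lengthKer n)).FiniteIndex ∧
      Nonempty ((lengthKer n) ≃*
        (Subgroup.map (QuotientGroup.mk' (Subgroup.center (BraidGroup n))) (lengthKer n)) ×
          Multiplicative ℤ) := by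
  have hfin := finiteIndex_lengthKer (n := n) (by omega)
  obtain ⟨eK⟩ := nonempty_lengthKer_mulEquiv_prod_center hn
  obtain ⟨eZ⟩ := nonempty_center_mulEquiv_int hn
  exact ⟨hfin, center_le_lengthKer hn,
    ⟨lengthKerRetraction n, fun _ => rfl, lengthKerRetraction_mem_center,
      fun _ => lengthKerRetraction_of_mem_center hn⟩,
    ⟨eK⟩, finiteIndex_map_mk' _, ⟨eK.trans (.prodCongr (.refl _) eZ)⟩⟩

/-- STATEMENT 4: for `n ≥ 4`, the subgroup `K = ker (B_n → ℤ/n(n-1)ℤ)` has finite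
index, contains the center `Z` of `B_n`, the map `g ↦ z^{L(g)/n(n-1)}` is a
homomorphism `K → Z` splitting `1 → Z → K → K/Z → 1`, hence `K ≅ (K/Z) × Z` where
`K/Z` is a finite index subgroup of `B_n/Z`; in particular `B_n` is abstractly
commensurable to `(K/Z) × ℤ`. -/
theorem braid_commensurable_with_product (n : ℕ) (hn : 4 ≤ n) :
    (lengthKer n).FiniteIndex ∧
      Subgroup.center (BraidGroup n) ≤ lengthKer n ∧
      (∃ s : lengthKer n →* BraidGroup n,
        (∀ g : lengthKer n,
          s g = fullTwist n ^
            (Multiplicative.toAdd (lengthHom n (g : BraidGroup n)) / ((n : ℤ) * ((n : ℤ) - 1)))) ∧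
        (∀ g : lengthKer n, s g ∈ Subgroup.center (BraidGroup n)) ∧
        (∀ g : lengthKer n,
          (g : BraidGroup n) ∈ Subgroup.center (BraidGroup n) → s g = (g : BraidGroup n))) ∧
      Nonempty ((lengthKer n) ≃*
        (Subgroup.map (QuotientGroup.mk' (Subgroup.center (BraidGroup n))) (lengthKer n)) ×
          (Subgroup.center (BraidGroup n))) ∧
      (Subgroup.map (QuotientGroup.mk' (Subgroup.center (BraidGroup n)))
        (lengthKer n)).FiniteIndex ∧
      Nonempty ((lengthKer n) ≃*
        (Subgroup.map (QuotientGroup.mk' (Subgroup.center (BraidGroup n))) (lengthKer n)) ×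
          Multiplicative ℤ) :=
  braid_commensurable_with_product_general n (by omega)
end

section
/- Let H be a group such that every finite index subgroup of H has trivial center, and let G = H × ℤ. Then for every finite index subgroup Γ of G, the center of Γ equals Γ ∩ ({1} × ℤ). -/
/-!
The projection `H × ℤ → H` is surjective with central kernel `{1} × ℤ`, and this is all that
matters. A surjection `f : G → H` sends a finite index subgroup `Γ` to a finite index subgroup
`f(Γ)`, and sends the center of `Γ` into the center of `f(Γ)`. If the latter is trivial, the
center of `Γ` lies in the kernel of `f`; conversely, a central kernel meets `Γ` in central elements.
-/

section

open Subgroup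

variable {G H : Type*} [Group G] [Group H]

theorem map_subtype_center (Γ : Subgroup G) :
    (center Γ).map Γ.subtype = Γ ⊓ centralizer (Γ : Set G) := by
  ext g
  simp [mem_center_iff, mem_centralizer_iff, and_comm]

theorem finiteIndex_map_of_surjective {f : G →* H} (hf : Function.Surjective f)
    (Γ : Subgroup G) [Γ.FiniteIndex] : (Γ.map f).FiniteIndex :=
  ⟨ne_zero_of_dvd_ne_zero FiniteIndex.index_ne_zero (Γ.index_map_dvd hf)⟩

theorem map_inf_centralizer_le (f : G →* H) (Γ : Subgroup G) :
    (Γ ⊓ centralizer (Γ : Set G)).map f ≤ Γ.map f ⊓ centralizer (Γ.map f : Set H) := by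
  rw [coe_map]
  exact (map_inf_le _ _ f).trans
    (inf_le_inf_left _ (map_centralizer_le_centralizer_image (Γ : Set G) f))

theorem map_subtype_center_le_ker {f : G →* H} {Γ : Subgroup G}
    (hcenter : center (Γ.map f) = ⊥) : (center Γ).map Γ.subtype ≤ f.ker := by
  rw [← Subgroup.map_eq_bot_iff, eq_bot_iff]
  calc ((center Γ).map Γ.subtype).map f
      = (Γ ⊓ centralizer (Γ : Set G)).map f := by rw [map_subtype_center]
    _ ≤ Γ.map f ⊓ centralizer (Γ.map f : Set H) := map_inf_centralizer_le f Γ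
    _ = (center (Γ.map f)).map (Γ.map f).subtype := (map_subtype_center _).symm
    _ = ⊥ := by rw [hcenter, Subgroup.map_bot]

theorem inf_le_map_subtype_center {Z : Subgroup G} (hZ : Z ≤ center G) (Γ : Subgroup G) :
    Γ ⊓ Z ≤ (center Γ).map Γ.subtype := by
  rw [map_subtype_center]
  exact inf_le_inf_left Γ (hZ.trans (center_le_centralizer _))

theorem ker_fst_le_center (H A : Type*) [Group H] [CommGroup A] :
    (MonoidHom.fst H A).ker ≤ center (H × A) := by
  rw [MonoidHom.ker_fst, Subgroup.center_prod, CommGroup.center_eq_top]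
  exact prod_mono bot_le le_rfl

theorem center_of_finiteIndex_subgroup_of_prod_general
    (hH : ∀ K : Subgroup H, K.FiniteIndex → center K = ⊥)
    {f : G →* H} (hf : Function.Surjective f) (hker : f.ker ≤ center G)
    (Γ : Subgroup G) [Γ.FiniteIndex] :
    (center Γ).map Γ.subtype = Γ ⊓ f.ker :=
  le_antisymm
    (le_inf (map_subtype_le _)
      (map_subtype_center_le_ker (hH _ (finiteIndex_map_of_surjective hf Γ))))
    (inf_le_map_subtype_center hker Γ)

end

/-- STATEMENT 6: if every finite index subgroup of `H` has trivial center and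
`G = H × ℤ`, then the center of any finite index subgroup `Γ` of `G` is
`Γ ∩ ({1} × ℤ)`. -/
theorem center_of_finiteIndex_subgroup_of_prod (H : Type*) [Group H]
    (hH : ∀ K : Subgroup H, K.FiniteIndex → Subgroup.center K = ⊥)
    (Γ : Subgroup (H × Multiplicative ℤ)) (hΓ : Γ.FiniteIndex) :
    Subgroup.map Γ.subtype (Subgroup.center Γ) =
      Γ ⊓ (⊥ : Subgroup H).prod (⊤ : Subgroup (Multiplicative ℤ)) := by
  rw [← MonoidHom.ker_fst]
  exact center_of_finiteIndex_subgroup_of_prod_general hH Prod.fst_surjective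
    (ker_fst_le_center H _) Γ
end

section
/- Let H be a group such that every finite index subgroup of H has trivial center, and let G = H × ℤ. Then every finite index subgroup Γ of G contains a finite index subgroup Γ' of the form Γ' = Ĥ' × Z(Γ), where Ĥ' is a finite index subgroup of H × {1} and Z(Γ) = Γ ∩ ({1} × ℤ) is the center of Γ. -/
/-!
An element of `Γ ≤ H × A` that is central in `Γ` has its first coordinate central in the projection
of `Γ` to `H`; when that projection has trivial center and `A` is commutative, this forces
`Z(Γ) = Γ ∩ ({1} × A)`. The subgroup generated by `Γ ∩ (H × {1})` and `Γ ∩ ({1} × A)` is the product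
of the preimages of `Γ` under the two inclusions, and each preimage has finite index in its factor
when `Γ` has finite index in `H × A`.
-/

section Center

variable {G G' : Type*} [Group G] [Group G']

theorem map_subtype_center_eq_inf_centralizer (K : Subgroup G) :
    (Subgroup.center K).map K.subtype = K ⊓ Subgroup.centralizer (K : Set G) := by
  ext g
  simp only [Subgroup.mem_map, Subgroup.mem_center_iff, Subgroup.mem_inf,
    Subgroup.mem_centralizer_iff, Subgroup.subtype_apply, Subtype.exists, Subtype.forall,
    Subtype.ext_iff, Subgroup.coe_mul, SetLike.mem_coe, exists_and_right, exists_eq_right,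
    exists_prop]

theorem map_map_subtype_center_le (f : G →* G') (K : Subgroup G) :
    ((Subgroup.center K).map K.subtype).map f ≤
      (Subgroup.center (K.map f)).map (K.map f).subtype := by
  simp only [map_subtype_center_eq_inf_centralizer, Subgroup.coe_map]
  exact (Subgroup.map_inf_le _ _ f).trans
    (inf_le_inf_left _ (Subgroup.map_centralizer_le_centralizer_image _ f))

end Center

section FiniteIndex

variable {G G' : Type*} [Group G] [Group G']

theorem finiteIndex_comap (f : G →* G') (K : Subgroup G') [K.FiniteIndex] :
    (K.comap f).FiniteIndex := by
  rw [Subgroup.finiteIndex_iff, Subgroup.index_comap]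
  exact (K.subgroupOf f.range).index_ne_zero_of_finite

theorem finiteIndex_map_of_surjective_s4 {f : G →* G'} (hf : Function.Surjective f)
    (K : Subgroup G) [K.FiniteIndex] : (K.map f).FiniteIndex :=
  ⟨ne_zero_of_dvd_ne_zero Subgroup.FiniteIndex.index_ne_zero (K.index_map_dvd hf)⟩

theorem finiteIndex_prod (K : Subgroup G) (L : Subgroup G') [K.FiniteIndex] [L.FiniteIndex] :
    (K.prod L).FiniteIndex := by
  rw [Subgroup.finiteIndex_iff, Subgroup.index_prod]
  exact mul_ne_zero K.index_ne_zero_of_finite L.index_ne_zero_of_finite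

end FiniteIndex

section Prod

variable {H A : Type*} [Group H] [Group A] (Γ : Subgroup (H × A))

theorem inf_bot_prod_top_eq_bot_prod_comap_inr :
    Γ ⊓ (⊥ : Subgroup H).prod ⊤ = (⊥ : Subgroup H).prod (Γ.comap (MonoidHom.inr H A)) := by
  ext ⟨h, a⟩
  simp only [Subgroup.mem_inf, Subgroup.mem_prod, Subgroup.mem_bot, Subgroup.mem_top, and_true,
    Subgroup.mem_comap, MonoidHom.inr_apply]
  constructor
  · rintro ⟨hmem, rfl⟩
    exact ⟨rfl, hmem⟩
  · rintro ⟨rfl, hmem⟩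
    exact ⟨hmem, rfl⟩

theorem subgroup_prod_bot_sup_bot_prod (K : Subgroup H) (L : Subgroup A) :
    K.prod ⊥ ⊔ (⊥ : Subgroup H).prod L = K.prod L := by
  refine le_antisymm
    (sup_le (Subgroup.prod_mono_right K bot_le) (Subgroup.prod_mono_left L bot_le)) ?_
  rintro ⟨h, a⟩ ⟨hh, ha⟩
  rw [← Prod.fst_mul_snd (h, a)]
  exact Subgroup.mul_mem_sup ⟨hh, one_mem _⟩ ⟨one_mem _, ha⟩

theorem comap_inl_prod_bot_sup_inf_bot_prod_top :
    (Γ.comap (MonoidHom.inl H A)).prod ⊥ ⊔ Γ ⊓ (⊥ : Subgroup H).prod ⊤ =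
      (Γ.comap (MonoidHom.inl H A)).prod (Γ.comap (MonoidHom.inr H A)) := by
  rw [inf_bot_prod_top_eq_bot_prod_comap_inr, subgroup_prod_bot_sup_bot_prod]

theorem comap_inl_prod_comap_inr_le :
    (Γ.comap (MonoidHom.inl H A)).prod (Γ.comap (MonoidHom.inr H A)) ≤ Γ :=
  Subgroup.prod_le_iff.mpr ⟨Subgroup.map_comap_le _ _, Subgroup.map_comap_le _ _⟩

theorem finiteIndex_comap_inl_prod_comap_inr [Γ.FiniteIndex] :
    ((Γ.comap (MonoidHom.inl H A)).prod (Γ.comap (MonoidHom.inr H A))).FiniteIndex :=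
  have := finiteIndex_comap (MonoidHom.inl H A) Γ
  have := finiteIndex_comap (MonoidHom.inr H A) Γ
  finiteIndex_prod _ _

theorem map_subtype_center_le_bot_prod_top
    (hΓ : Subgroup.center (Γ.map (MonoidHom.fst H A)) = ⊥) :
    (Subgroup.center Γ).map Γ.subtype ≤ (⊥ : Subgroup H).prod ⊤ := by
  refine Subgroup.le_prod_iff.mpr ⟨?_, le_top⟩
  simpa only [hΓ, Subgroup.map_bot] using map_map_subtype_center_le (MonoidHom.fst H A) Γ

end Prod

section ProdComm

variable {H A : Type*} [Group H] [CommGroup A] (Γ : Subgroup (H × A))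

theorem bot_prod_top_le_center :
    (⊥ : Subgroup H).prod (⊤ : Subgroup A) ≤ Subgroup.center (H × A) := by
  rw [Subgroup.center_prod, CommGroup.center_eq_top]
  exact Subgroup.prod_mono_left ⊤ bot_le

theorem map_subtype_center_eq_inf_bot_prod_top
    (hΓ : Subgroup.center (Γ.map (MonoidHom.fst H A)) = ⊥) :
    (Subgroup.center Γ).map Γ.subtype = Γ ⊓ (⊥ : Subgroup H).prod ⊤ := by
  refine le_antisymm
    (le_inf (Subgroup.map_subtype_le _) (map_subtype_center_le_bot_prod_top Γ hΓ)) ?_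
  rw [map_subtype_center_eq_inf_centralizer]
  exact inf_le_inf_left Γ (bot_prod_top_le_center.trans (Subgroup.center_le_centralizer _))

theorem finiteIndex_subgroup_of_prod_contains_product_general [Γ.FiniteIndex]
    (hΓ : Subgroup.center (Γ.map (MonoidHom.fst H A)) = ⊥) :
    (Subgroup.center Γ).map Γ.subtype = Γ ⊓ (⊥ : Subgroup H).prod ⊤ ∧
      ∃ K : Subgroup H, K.FiniteIndex ∧
        K.prod ⊥ ⊔ (Subgroup.center Γ).map Γ.subtype ≤ Γ ∧
        ((K.prod ⊥ ⊔ (Subgroup.center Γ).map Γ.subtype).subgroupOf Γ).FiniteIndex := by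
  rw [map_subtype_center_eq_inf_bot_prod_top Γ hΓ]
  refine ⟨rfl, Γ.comap (MonoidHom.inl H A), finiteIndex_comap _ Γ, ?_⟩
  rw [comap_inl_prod_bot_sup_inf_bot_prod_top]
  have := finiteIndex_comap_inl_prod_comap_inr Γ
  exact ⟨comap_inl_prod_comap_inr_le Γ, inferInstance⟩

end ProdComm

/-- STATEMENT 9: if every finite index subgroup of `H` has trivial center and
`G = H × ℤ`, then every finite index subgroup `Γ` of `G` contains a finite index
subgroup `Γ'` of the form `Ĥ' × Z(Γ)`, where `Ĥ'` is a finite index subgroup of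
`H × {1}` and `Z(Γ) = Γ ∩ ({1} × ℤ)` is the center of `Γ`. -/
theorem finiteIndex_subgroup_of_prod_contains_product (H : Type*) [Group H]
    (hH : ∀ K : Subgroup H, K.FiniteIndex → Subgroup.center K = ⊥)
    (Γ : Subgroup (H × Multiplicative ℤ)) (hΓ : Γ.FiniteIndex) :
    Subgroup.map Γ.subtype (Subgroup.center Γ) =
        Γ ⊓ (⊥ : Subgroup H).prod (⊤ : Subgroup (Multiplicative ℤ)) ∧
      ∃ K : Subgroup H, K.FiniteIndex ∧
        K.prod (⊥ : Subgroup (Multiplicative ℤ)) ⊔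
            Subgroup.map Γ.subtype (Subgroup.center Γ) ≤ Γ ∧
        ((K.prod (⊥ : Subgroup (Multiplicative ℤ)) ⊔
            Subgroup.map Γ.subtype (Subgroup.center Γ)).subgroupOf Γ).FiniteIndex := by
  exact finiteIndex_subgroup_of_prod_contains_product_general Γ
    (hH _ (finiteIndex_map_of_surjective_s4 Prod.fst_surjective Γ))
end

section
/- Let H be any group. The restriction map Hom(Γ_1, ℤ) → Hom(Γ_2, ℤ) is injective whenever Γ_2 ≤ Γ_1 are finite index subgroups of H, and the direct limit of the direct system of abelian groups Hom(Γ, ℤ), taken over all finite index subgroups Γ of H directed by reverse inclusion with restriction maps as connecting homomorphisms, is a torsion-free divisible abelian group. -/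
/-- The finite index subgroups of `H`, ordered by *reverse* inclusion. -/
def FinIndexSubgroup (H : Type*) [Group H] : Type _ := {Γ : Subgroup H // Γ.FiniteIndex}

namespace FinIndexSubgroup

variable {H : Type*} [Group H]

instance : Preorder (FinIndexSubgroup H) :=
  Preorder.lift fun a => OrderDual.toDual a.1

/-- In the reverse-inclusion order, `i ≤ j` means `j` is a subgroup of `i`. -/
theorem le_iff {i j : FinIndexSubgroup H} (h : i ≤ j) : j.1 ≤ i.1 := h

instance : IsDirected (FinIndexSubgroup H) (· ≤ ·) :=
  ⟨fun a b => ⟨⟨a.1 ⊓ b.1, by haveI := a.2; haveI := b.2; infer_instance⟩,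
    by exact (inf_le_left : a.1 ⊓ b.1 ≤ a.1), by exact (inf_le_right : a.1 ⊓ b.1 ≤ b.1)⟩⟩

noncomputable instance : DecidableEq (FinIndexSubgroup H) := Classical.decEq _

end FinIndexSubgroup

/-- The abelian group `Hom(Γ, ℤ)` of homomorphisms from a finite index subgroup `Γ`
of `H` to `ℤ`. -/
abbrev HomToZ {H : Type*} [Group H] (i : FinIndexSubgroup H) : Type _ :=
  Additive i.1 →+ ℤ

/-- The connecting maps of the direct system: restriction of homomorphisms along the
inclusion of a smaller finite index subgroup. -/
def restrictHomToZ {H : Type*} [Group H] (i j : FinIndexSubgroup H) (hij : i ≤ j) :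
    HomToZ i →+ HomToZ j where
  toFun φ := φ.comp (MonoidHom.toAdditive (Subgroup.inclusion (FinIndexSubgroup.le_iff hij)))
  map_zero' := by ext; rfl
  map_add' φ ψ := by ext; rfl

instance {H : Type*} [Group H] :
    DirectedSystem (fun i : FinIndexSubgroup H => HomToZ i)
      (fun i j hij φ => restrictHomToZ i j hij φ) where
  map_self := by intro i x; ext; rfl
  map_map := by intro i j k hij hjk x; ext; rfl

/-- The direct limit of the groups `Hom(Γ, ℤ)` over all finite index subgroups `Γ`
of `H`, directed by reverse inclusion, with restriction as connecting maps. -/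
abbrev HomDirectLimit (H : Type*) [Group H] : Type _ :=
  AddCommGroup.DirectLimit (fun i : FinIndexSubgroup H => HomToZ i)
    (fun i j hij => restrictHomToZ i j hij)

/-!
Some positive power of each `g ∈ Γ₁` lies in the finite index subgroup `Γ₂`, and `ℤ` is
torsion-free, so a homomorphism `Γ₁ → ℤ` is determined by its restriction to `Γ₂`. Torsion-freeness
passes from the groups `Hom(Γ, ℤ)` to their direct limit. To divide `φ : Γ → ℤ` by `q`, restrict it
to the finite index subgroup `φ⁻¹(qℤ)`, on which all its values are divisible by `q`.
-/

section AddMonoidHom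

theorem addMonoidHom_eq_of_eqOn_finiteIndex {G A : Type*} [AddGroup G] [AddMonoid A]
    [IsAddTorsionFree A] (K : AddSubgroup G) [K.FiniteIndex] {φ ψ : G →+ A}
    (h : Set.EqOn φ ψ K) : φ = ψ := by
  ext g
  obtain ⟨n, hn, -, hng⟩ :=
    AddSubgroup.exists_nsmul_mem_of_index_ne_zero (AddSubgroup.FiniteIndex.index_ne_zero (H := K)) g
  have nsmul_eq : n • φ g = n • ψ g := by
    rw [← map_nsmul, ← map_nsmul]
    exact h hng
  exact nsmul_right_injective hn.ne' nsmul_eq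

instance isAddTorsionFree_addMonoidHom {G A : Type*} [AddZeroClass G] [AddCommMonoid A]
    [IsAddTorsionFree A] : IsAddTorsionFree (G →+ A) :=
  Function.Injective.isAddTorsionFree (AddMonoidHom.coeFn G A) DFunLike.coe_injective

theorem exists_comp_eq_of_forall_mem_range {G A B : Type*} [AddZeroClass G] [AddGroup A]
    [AddGroup B] {f : B →+ A} (hf : Function.Injective f) {φ : G →+ A}
    (hφ : ∀ g, φ g ∈ f.range) : ∃ ψ : G →+ B, f.comp ψ = φ := by
  refine ⟨(AddMonoidHom.ofInjective hf).symm.toAddMonoidHom.comp (φ.codRestrict f.range hφ), ?_⟩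
  ext g
  exact AddMonoidHom.apply_ofInjective_symm hf ⟨φ g, hφ g⟩

theorem exists_nsmul_eq_of_forall_mem_range {G A : Type*} [AddZeroClass G] [AddCommGroup A]
    [IsAddTorsionFree A] {n : ℕ} (hn : n ≠ 0) {φ : G →+ A}
    (hφ : ∀ g, φ g ∈ (nsmulAddMonoidHom n : A →+ A).range) : ∃ ψ : G →+ A, n • ψ = φ := by
  have hinj : Function.Injective (nsmulAddMonoidHom n : A →+ A) := nsmul_right_injective hn
  obtain ⟨ψ, hψ⟩ := exists_comp_eq_of_forall_mem_range hinj hφ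
  exact ⟨ψ, hψ⟩

theorem finiteIndex_addSubgroup_comap {G A : Type*} [AddGroup G] [AddGroup A] (φ : G →+ A)
    (K : AddSubgroup A) [K.FiniteIndex] : (K.comap φ).FiniteIndex where
  index_ne_zero := by
    rw [AddSubgroup.index_comap]
    exact (AddSubgroup.isFiniteRelIndex_of_finiteIndex (H := K)).relIndex_ne_zero

theorem finiteIndex_range_nsmulAddMonoidHom_int {n : ℕ} (hn : n ≠ 0) :
    (nsmulAddMonoidHom n : ℤ →+ ℤ).range.FiniteIndex where
  index_ne_zero := by
    rwa [Int.range_nsmulAddMonoidHom, Int.index_zmultiples, Int.natAbs_natCast]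

end AddMonoidHom

section DirectLimit

variable {ι : Type*} [Preorder ι] [Nonempty ι] [IsDirectedOrder ι] [DecidableEq ι]
  {G : ι → Type*}

theorem isAddTorsionFree_directLimit [∀ i, AddCommGroup (G i)] {f : ∀ i j, i ≤ j → G i →+ G j}
    [DirectedSystem G fun i j h ↦ f i j h] [∀ i, IsAddTorsionFree (G i)] :
    IsAddTorsionFree (AddCommGroup.DirectLimit G f) where
  nsmul_right_injective n hn := by
    refine (injective_iff_map_eq_zero
      (nsmulAddMonoidHom n : AddCommGroup.DirectLimit G f →+ _)).2 fun x hx ↦ ?_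
    induction x using AddCommGroup.DirectLimit.induction_on with
    | ih i x =>
      have of_nsmul_eq_zero : AddCommGroup.DirectLimit.of G f i (n • x) = 0 := by
        rwa [map_nsmul]
      obtain ⟨j, hij, hj⟩ := AddCommGroup.DirectLimit.of.zero_exact i _ of_nsmul_eq_zero
      rw [map_nsmul, nsmul_eq_zero_iff_right hn] at hj
      rw [← AddCommGroup.DirectLimit.of_f hij, hj, map_zero]

theorem exists_nsmul_eq_directLimit [∀ i, AddCommMonoid (G i)]
    {f : ∀ i j, i ≤ j → G i →+ G j} {n : ℕ}
    (h : ∀ i (x : G i), ∃ j, ∃ hij : i ≤ j, ∃ y : G j, n • y = f i j hij x)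
    (x : AddCommGroup.DirectLimit G f) : ∃ y, n • y = x := by
  induction x using AddCommGroup.DirectLimit.induction_on with
  | ih i x =>
    obtain ⟨j, hij, y, hy⟩ := h i x
    exact ⟨AddCommGroup.DirectLimit.of G f j y, by
      rw [← map_nsmul, hy, AddCommGroup.DirectLimit.of_f]⟩

end DirectLimit

namespace FinIndexSubgroup

variable {H : Type*} [Group H]

instance : Nonempty (FinIndexSubgroup H) := ⟨⟨⊤, inferInstance⟩⟩

/-- A finite index subgroup `K` of a finite index subgroup `i` of `H`, regarded as a finite index
subgroup of `H`. It is given as an additive subgroup of `Additive i.1`, the domain of the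
homomorphisms in `HomToZ i`, so that preimages under these can be used directly. -/
def ofAddSubgroup (i : FinIndexSubgroup H) (K : AddSubgroup (Additive i.1)) [hK : K.FiniteIndex] :
    FinIndexSubgroup H :=
  ⟨(AddSubgroup.toSubgroup' K).map i.1.subtype, ⟨by
    rw [Subgroup.index_map_subtype]
    exact mul_ne_zero hK.index_ne_zero i.2.index_ne_zero⟩⟩

theorem le_ofAddSubgroup (i : FinIndexSubgroup H) (K : AddSubgroup (Additive i.1))
    [K.FiniteIndex] : i ≤ i.ofAddSubgroup K :=
  Subgroup.map_subtype_le _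

theorem inclusion_ofAddSubgroup_mem (i : FinIndexSubgroup H) (K : AddSubgroup (Additive i.1))
    [K.FiniteIndex] (g : (i.ofAddSubgroup K).1) :
    Additive.ofMul (Subgroup.inclusion (le_iff (i.le_ofAddSubgroup K)) g) ∈ K := by
  obtain ⟨k, hk, hkg⟩ := g.2
  have inclusion_eq : Subgroup.inclusion (le_iff (i.le_ofAddSubgroup K)) g = k :=
    Subtype.ext hkg.symm
  rw [inclusion_eq]
  exact hk

end FinIndexSubgroup

section Restriction

variable {H : Type*} [Group H]

theorem restrictHomToZ_injective (i j : FinIndexSubgroup H) (hij : i ≤ j) :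
    Function.Injective (restrictHomToZ i j hij) := by
  intro φ ψ hφψ
  have := j.2
  have : (j.1.subgroupOf i.1).toAddSubgroup.FiniteIndex :=
    Subgroup.finiteIndex_toAddSubgroup_iff.2 inferInstance
  refine addMonoidHom_eq_of_eqOn_finiteIndex (j.1.subgroupOf i.1).toAddSubgroup fun g hg ↦ ?_
  exact DFunLike.congr_fun hφψ (Additive.ofMul (⟨_, hg⟩ : j.1))

theorem exists_nsmul_eq_restrictHomToZ (i : FinIndexSubgroup H) (φ : HomToZ i) {q : ℕ}
    (hq : q ≠ 0) :
    ∃ j, ∃ hij : i ≤ j, ∃ ψ : HomToZ j, q • ψ = restrictHomToZ i j hij φ := by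
  have := finiteIndex_range_nsmulAddMonoidHom_int hq
  let K : AddSubgroup (Additive i.1) := (nsmulAddMonoidHom q).range.comap φ
  have : K.FiniteIndex := finiteIndex_addSubgroup_comap φ _
  exact ⟨i.ofAddSubgroup K, i.le_ofAddSubgroup K,
    exists_nsmul_eq_of_forall_mem_range hq fun g ↦ i.inclusion_ofAddSubgroup_mem K g.toMul⟩

end Restriction

/-- STATEMENT 12: for any group `H`, restriction `Hom(Γ₁, ℤ) → Hom(Γ₂, ℤ)` is
injective whenever `Γ₂ ≤ Γ₁` are finite index subgroups of `H` (here `i ≤ j` means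
`Γ_j ⊆ Γ_i`), and the direct limit of the `Hom(Γ, ℤ)` over all finite index
subgroups, with restriction as connecting maps, is a torsion-free divisible abelian
group. -/
theorem homDirectLimit_torsionFree_divisible (H : Type*) [Group H] :
    (∀ (i j : FinIndexSubgroup H) (hij : i ≤ j),
      Function.Injective (restrictHomToZ i j hij)) ∧
      (∀ (x : HomDirectLimit H) (n : ℤ), n ≠ 0 → n • x = 0 → x = 0) ∧
      (∀ (x : HomDirectLimit H) (q : ℕ), 0 < q → ∃ y : HomDirectLimit H, (q : ℤ) • y = x) := by
  refine ⟨restrictHomToZ_injective, fun x n hn hnx ↦ ?_, fun x q hq ↦ ?_⟩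
  · have : IsAddTorsionFree (HomDirectLimit H) := isAddTorsionFree_directLimit
    exact (IsAddTorsionFree.zsmul_eq_zero_iff_right hn).1 hnx
  · simp only [natCast_zsmul]
    exact exists_nsmul_eq_directLimit
      (fun i φ ↦ exists_nsmul_eq_restrictHomToZ i φ hq.ne') x
end

section
/- For n ≥ 3 and every positive integer k, there exists a finite index subgroup Γ of B_n such that Hom(Γ, ℤ) contains a free abelian subgroup of rank k; equivalently, the first Betti number of Γ is at least k. In particular, the virtual first Betti number of B_n is infinite. -/
/-!
Forgetting all but three strands is a homomorphism to `B_3` on the finite index subgroup of `B_n`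
whose braids preserve a given set of three strands. The quotient `PSL₂(ℤ) ≅ ℤ/2 * ℤ/3` of `B_3` has
a free subgroup of rank two and index six, and a finite index subgroup of that free group surjects
onto `ℤ^k`. In each case the homomorphism on the finite index subgroup comes from a homomorphism of
the whole group to a permutational wreath product, given by its values on the generators.
-/

/-- `G` virtually surjects onto `H` if some finite index subgroup of `G` has `H` as a quotient. -/
def VirtuallySurjects (G H : Type*) [Group G] [Group H] : Prop :=
  ∃ Γ : Subgroup G, Γ.FiniteIndex ∧ ∃ φ : Γ →* H, Function.Surjective φ

theorem VirtuallySurjects.trans {G H K : Type*} [Group G] [Group H] [Group K]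
    (hGH : VirtuallySurjects G H) (hHK : VirtuallySurjects H K) : VirtuallySurjects G K := by
  obtain ⟨Γ, hΓ, φ, hφ⟩ := hGH
  obtain ⟨Δ, hΔ, ψ, hψ⟩ := hHK
  have hindex : ((Δ.comap φ).map Γ.subtype).FiniteIndex := by
    constructor
    rw [Subgroup.index_map_subtype, Subgroup.index_comap_of_surjective _ hφ]
    exact mul_ne_zero hΔ.index_ne_zero hΓ.index_ne_zero
  let e := (Δ.comap φ).equivMapOfInjective Γ.subtype Γ.subtype_injective
  exact ⟨_, hindex, (ψ.comp (φ.subgroupComap Δ)).comp e.symm.toMonoidHom,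
    (hψ.comp (φ.subgroupComap_surjective_of_surjective Δ hφ)).comp e.symm.surjective⟩

theorem exists_injective_addMonoidHom_of_surjective {A ι : Type*} [AddGroup A] [Finite ι]
    (φ : A →+ (ι → ℤ)) (hφ : Function.Surjective φ) :
    ∃ f : (ι → ℤ) →+ (A →+ ℤ), Function.Injective f := by
  classical
  cases nonempty_fintype ι
  let dot : (ι → ℤ) →+ (A →+ ℤ) :=
    { toFun := fun v ↦ (dotProductEquiv ℤ ι v).toAddMonoidHom.comp φ
      map_zero' := by ext; simp
      map_add' := by intros; ext; simp }
  refine ⟨dot, fun v w hvw ↦ (dotProductEquiv ℤ ι).injective ?_⟩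
  exact LinearMap.ext <| hφ.forall.2 fun a ↦ DFunLike.congr_fun hvw a

section Wreath

/-- The permutational wreath product of `Q` by a group `P` acting on `X`. A homomorphism from `G`
into it amounts to an action of `G` on `X` through `P` together with a `Q`-valued cocycle. -/
abbrev PermWreathProduct (Q X P : Type*) [Group Q] [Group P] [MulAction P X] : Type _ :=
  (X → Q) ⋊[mulAutArrow] P

variable {Q X P : Type*} [Group Q] [Group P] [MulAction P X]

namespace PermWreathProduct

theorem mul_left_apply (a b : PermWreathProduct Q X P) (x : X) :
    (a * b).left x = a.left x * b.left (a.right⁻¹ • x) :=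
  rfl

/-- The elements of the wreath product whose image in `P` fixes `x`. -/
def stabilizer (x : X) : Subgroup (PermWreathProduct Q X P) :=
  (MulAction.stabilizer P x).comap SemidirectProduct.rightHom

/-- The coordinate at `x`, which is multiplicative on the elements fixing `x`. -/
def coordinateHom (x : X) : stabilizer (Q := Q) (P := P) x →* Q where
  toFun a := a.1.left x
  map_one' := rfl
  map_mul' a b := by
    have ha : a.1.right • x = x := a.2
    rw [Subgroup.coe_mul, mul_left_apply, inv_smul_eq_iff.2 ha.symm]

end PermWreathProduct

open PermWreathProduct in
theorem virtuallySurjects_of_permWreathProduct {G : Type*} [Group G] [Finite P]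
    (ρ : G →* PermWreathProduct Q X P) (x : X) {S : Set Q} (hS : Subgroup.closure S = ⊤)
    (hρ : ∀ s ∈ S, ∃ w ∈ ρ.range, w.right • x = x ∧ w.left x = s) :
    VirtuallySurjects G Q := by
  have hindex : ((stabilizer x).comap ρ).FiniteIndex := by
    constructor
    rw [stabilizer, Subgroup.comap_comap, Subgroup.index_comap]
    exact Subgroup.FiniteIndex.index_ne_zero
  refine ⟨_, hindex, (coordinateHom x).comp (ρ.subgroupComap (stabilizer x)), ?_⟩
  rw [← MonoidHom.range_eq_top, eq_top_iff, ← hS, Subgroup.closure_le]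
  intro s hs
  obtain ⟨_, ⟨g, rfl⟩, hfix, hcoordinate⟩ := hρ s hs
  exact ⟨⟨g, hfix⟩, hcoordinate⟩

end Wreath

/- The wreath product data describe the covering of the figure eight by a cycle through the
generators of `Q` in which each vertex carries a loop, labelled by the corresponding generator. -/
theorem virtuallySurjects_freeGroup_of_fg (Q : Type*) [Group Q] [Group.FG Q] :
    VirtuallySurjects (FreeGroup Bool) Q := by
  classical
  obtain ⟨S, hS⟩ := Group.FG.out (G := Q)
  let X := (insert 1 S : Finset Q)
  let x₀ : X := ⟨1, Finset.mem_insert_self 1 S⟩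
  obtain ⟨c, hc, -⟩ := Finset.exists_cycleOn (Finset.univ : Finset X)
  let rotation : PermWreathProduct Q X (Equiv.Perm X) := SemidirectProduct.inr c
  let labels : PermWreathProduct Q X (Equiv.Perm X) := SemidirectProduct.inl Subtype.val
  let ρ := FreeGroup.lift (Bool.rec labels rotation)
  have hrotation : rotation ∈ ρ.range := ⟨.of true, FreeGroup.lift_apply_of⟩
  have hlabels : labels ∈ ρ.range := ⟨.of false, FreeGroup.lift_apply_of⟩
  refine virtuallySurjects_of_permWreathProduct ρ x₀ hS fun s hs ↦ ?_
  obtain ⟨i, hi⟩ : c.SameCycle x₀ ⟨s, Finset.mem_insert_of_mem hs⟩ := hc.2 (by simp) (by simp)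
  refine ⟨rotation ^ (-i) * labels * (rotation ^ (-i))⁻¹,
    mul_mem (mul_mem (zpow_mem hrotation _) hlabels) (inv_mem (zpow_mem hrotation _)), ?_⟩
  rw [← map_zpow, ← map_inv, ← SemidirectProduct.inl_aut]
  refine ⟨one_smul _ _, ?_⟩
  change (((c ^ (-i))⁻¹ • x₀ : X) : Q) = s
  rw [zpow_neg, inv_inv, Equiv.Perm.smul_def, hi]

namespace BraidGroup

variable {n : ℕ} {G : Type*} [Group G]

theorem exists_hom (f : Fin (n - 1) → G)
    (hbraid : ∀ i j : Fin (n - 1), (j : ℕ) = i + 1 → f i * f j * f i = f j * f i * f j)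
    (hcomm : ∀ i j : Fin (n - 1), (i : ℕ) + 1 < j → Commute (f i) (f j)) :
    ∃ ρ : BraidGroup n →* G, ∀ i, ρ (σ i) = f i := by
  have hrel : ∀ r ∈ braidRels (n - 1), FreeGroup.lift f r = 1 := by
    rintro _ (⟨i, j, hij, rfl⟩ | ⟨i, j, hij, rfl⟩) <;>
      simp only [map_mul, map_inv, FreeGroup.lift_apply_of, mul_inv_eq_one]
    exacts [hbraid i j hij, hcomm i j hij]
  exact ⟨PresentedGroup.toGroup hrel, fun i ↦ PresentedGroup.toGroup.of hrel⟩

theorem σ_braid {i j : Fin (n - 1)} (hij : (j : ℕ) = i + 1) :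
    (σ i * σ j * σ i : BraidGroup n) = σ j * σ i * σ j :=
  mul_inv_eq_one.1 <| PresentedGroup.one_of_mem (Or.inl ⟨i, j, hij, rfl⟩)

theorem commute_σ {i j : Fin (n - 1)} (hij : (i : ℕ) + 1 < j) :
    Commute (σ i : BraidGroup n) (σ j) :=
  mul_inv_eq_one.1 <| PresentedGroup.one_of_mem (Or.inr ⟨i, j, hij, rfl⟩)

/-- The generator `σ_r` of `B_m`, indexed by a natural number and extended by `1` when `r` is out
of range. -/
def natσ (m r : ℕ) : BraidGroup m :=
  if h : r < m - 1 then σ ⟨r, h⟩ else 1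

theorem natσ_braid {m r : ℕ} (hr : r + 2 < m) :
    natσ m r * natσ m (r + 1) * natσ m r = natσ m (r + 1) * natσ m r * natσ m (r + 1) := by
  rw [natσ, natσ, dif_pos (by omega), dif_pos (by omega)]
  exact σ_braid rfl

theorem commute_natσ (m : ℕ) {r s : ℕ} (hrs : r + 1 < s) : Commute (natσ m r) (natσ m s) := by
  unfold natσ
  split_ifs
  exacts [commute_σ hrs, .one_right _, .one_left _, .one_right _]

theorem exists_hom_of_sq_eq_one_of_pow_three_eq_one {x y : G} (hx : x ^ 2 = 1) (hy : y ^ 3 = 1) :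
    ∃ ρ : BraidGroup 3 →* G, x ∈ ρ.range ∧ y ∈ ρ.range := by
  have hab : y⁻¹ * x * (x * y⁻¹) = y := by
    calc y⁻¹ * x * (x * y⁻¹) = y⁻¹ * x ^ 2 * y⁻¹ := by rw [sq]; group
      _ = (y ^ 3)⁻¹ * y := by rw [hx]; group
      _ = y := by rw [hy, inv_one, one_mul]
  have haba : y⁻¹ * x * (x * y⁻¹) * (y⁻¹ * x) = x := by rw [hab, mul_inv_cancel_left]
  have hbab : x * y⁻¹ * (y⁻¹ * x) * (x * y⁻¹) = x := by
    rw [mul_assoc, hab, inv_mul_cancel_right]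
  obtain ⟨ρ, hρ⟩ := exists_hom (n := 3) ![y⁻¹ * x, x * y⁻¹]
    (by simp [Fin.forall_fin_two, haba, hbab]) (by intro i j; omega)
  have hσ₀ : ρ (σ 0) = y⁻¹ * x := hρ 0
  have hσ₁ : ρ (σ 1) = x * y⁻¹ := hρ 1
  exact ⟨ρ, ⟨σ 0 * σ 1 * σ 0, by rw [map_mul, map_mul, hσ₀, hσ₁, haba]⟩,
    ⟨σ 0 * σ 1, by rw [map_mul, hσ₀, hσ₁, hab]⟩⟩

end BraidGroup

/- In the degree six covering attached to `⟨x, y | x² = y³ = 1⟩`, two `y`-triangles `Fin 3 × {b}`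
are joined by three `x`-edges. Collapsing the triangles leaves two vertices and three edges, whose
fundamental group is free on the edges `1` and `2` once the edge `0` is collapsed as well. -/
theorem virtuallySurjects_braidGroup_three_freeGroup :
    VirtuallySurjects (BraidGroup 3) (FreeGroup Bool) := by
  let W := PermWreathProduct (FreeGroup Bool) (Fin 3 × Bool) (Equiv.Perm (Fin 3 × Bool))
  let edgeLabel : Fin 3 → FreeGroup Bool := ![1, .of true, .of false]
  let x : W := ⟨fun p ↦ if p.2 then edgeLabel p.1 else (edgeLabel p.1)⁻¹,
    Equiv.prodCongr (Equiv.refl _) Equiv.boolNot⟩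
  let y : W := SemidirectProduct.inr (Equiv.prodCongr (finRotate 3) (Equiv.refl _))
  have hx : x ^ 2 = 1 := by
    rw [sq]
    refine SemidirectProduct.ext (funext fun ⟨i, b⟩ ↦ ?_) (by decide)
    cases b
    · exact inv_mul_cancel _
    · exact mul_inv_cancel _
  have hy : y ^ 3 = 1 := by
    rw [← map_pow, ← map_one SemidirectProduct.inr]
    congr 1
    decide
  obtain ⟨ρ, hxρ, hyρ⟩ := BraidGroup.exists_hom_of_sq_eq_one_of_pow_three_eq_one hx hy
  refine virtuallySurjects_of_permWreathProduct ρ (0, false) (FreeGroup.closure_range_of Bool) ?_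
  rintro _ ⟨_ | _, rfl⟩
  · exact ⟨x * y * x * y⁻¹, mul_mem (mul_mem (mul_mem hxρ hyρ) hxρ) (inv_mem hyρ), by decide, rfl⟩
  · exact ⟨x * y⁻¹ * x * y, mul_mem (mul_mem (mul_mem hxρ (inv_mem hyρ)) hxρ) hyρ, by decide, rfl⟩

section ForgetStrands

open scoped Pointwise
open BraidGroup
open Equiv (swap)

theorem mem_swap_smul {α : Type*} [DecidableEq α] {S : Finset α} {u v x : α} :
    x ∈ swap u v • S ↔ swap u v x ∈ S := by
  rw [← Finset.inv_smul_mem_iff, Equiv.swap_inv, Equiv.Perm.smul_def]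

theorem swap_braid {α : Type*} [DecidableEq α] {u v w : α} (huv : u ≠ v) (hvw : v ≠ w)
    (huw : u ≠ w) : swap u v * swap v w * swap u v = swap v w * swap u v * swap v w := by
  have huvw := Equiv.swap_mul_swap_mul_swap huv huw
  have hwvu := Equiv.swap_mul_swap_mul_swap hvw.symm huw.symm
  rw [Equiv.swap_comm w v, Equiv.swap_comm v u] at hwvu
  rw [hwvu, huvw, Equiv.swap_comm]

variable {ι : Type*} [LinearOrder ι] {m : ℕ}

/-- The number of elements of `S` below `u`: the position of the strand `u` once all strands outside
`S` are forgotten. -/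
def strandRank (S : Finset ι) (u : ι) : ℕ :=
  (S.filter (· < u)).card

theorem strandRank_lt_strandRank {S : Finset ι} {u v : ι} (hu : u ∈ S) (huv : u < v) :
    strandRank S u < strandRank S v :=
  Finset.card_lt_card <| Finset.ssubset_iff.2 ⟨u, by simp, by grind⟩

theorem strandRank_lt_card {S : Finset ι} {u : ι} (hu : u ∈ S) : strandRank S u < S.card :=
  Finset.card_lt_card <| Finset.filter_ssubset.2 ⟨u, hu, lt_irrefl u⟩

theorem strandRank_of_covBy {u v : ι} (huv : u ⋖ v) (S : Finset ι) :
    strandRank S v = strandRank S u + if u ∈ S then 1 else 0 := by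
  have hlt : S.filter (· < v) = S.filter (· < u) ∪ S.filter (· = u) := by
    rw [← Finset.filter_or]
    exact Finset.filter_congr fun s _ ↦ by rw [huv.lt_iff_le_left, le_iff_lt_or_eq]
  have hdisj : Disjoint (S.filter (· < u)) (S.filter (· = u)) :=
    Finset.disjoint_filter.2 fun s _ hs ↦ hs.ne
  rw [strandRank, hlt, Finset.card_union_of_disjoint hdisj, Finset.filter_eq', strandRank]
  split_ifs <;> simp

theorem strandRank_swap_smul {u v x : ι} (hx : x ≤ u ∧ x ≤ v ∨ u < x ∧ v < x) (S : Finset ι) :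
    strandRank (swap u v • S) x = strandRank S x := by
  refine Finset.card_equiv (swap u v) fun s ↦ ?_
  have hs : swap u v s < x ↔ s < x := by
    rw [Equiv.swap_apply_def]
    grind
  rw [Finset.mem_filter, Finset.mem_filter, mem_swap_smul, hs]

/-- What remains of the crossing of the adjacent strands `u` and `v` once all strands outside `S`
are forgotten, as an element of the braid group on `m = #S` strands. -/
def forgetCrossing (m : ℕ) (u v : ι) (S : Finset ι) : BraidGroup m :=
  if u ∈ S ∧ v ∈ S then natσ m (strandRank S u) else 1

/-- The crossing of the adjacent strands `u` and `v`, recorded together with what remains of it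
on each set of `m` strands. -/
def crossing (m : ℕ) (u v : ι) :
    PermWreathProduct (BraidGroup m) (Set.powersetCard ι m) (Equiv.Perm ι) :=
  ⟨fun S ↦ forgetCrossing m u v S, swap u v⟩

theorem forgetCrossing_braid {u v w : ι} (huv : u ⋖ v) (hvw : v ⋖ w) {S : Finset ι}
    (hS : S.card = m) :
    forgetCrossing m u v S * forgetCrossing m v w (swap u v • S) *
        forgetCrossing m u v (swap v w • swap u v • S) =
      forgetCrossing m v w S * forgetCrossing m u v (swap v w • S) *
        forgetCrossing m v w (swap u v • swap v w • S) := by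
  have huw := huv.lt.trans hvw.lt
  have hrank₁ (T : Finset ι) : strandRank (swap u v • T) u = strandRank T u :=
    strandRank_swap_smul (.inl ⟨le_rfl, huv.le⟩) T
  have hrank₂ (T : Finset ι) : strandRank (swap v w • T) u = strandRank T u :=
    strandRank_swap_smul (.inl ⟨huv.le, huw.le⟩) T
  have hfix₁ : swap u v w = w := Equiv.swap_apply_of_ne_of_ne huw.ne' hvw.ne'
  have hfix₂ : swap v w u = u := Equiv.swap_apply_of_ne_of_ne huv.ne huw.ne
  simp only [forgetCrossing, strandRank_of_covBy huv, hrank₁, hrank₂, mem_swap_smul, hfix₁, hfix₂,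
    Equiv.swap_apply_left, Equiv.swap_apply_right]
  by_cases hall : u ∈ S ∧ v ∈ S ∧ w ∈ S
  · obtain ⟨hu, hv, hw⟩ := hall
    have hr : strandRank S u + 2 < m := by
      have := strandRank_lt_strandRank hu huv.lt
      have := strandRank_lt_strandRank hv hvw.lt
      have := strandRank_lt_card hw
      omega
    simpa [hu, hv, hw] using natσ_braid hr
  · by_cases hu : u ∈ S <;> by_cases hv : v ∈ S <;> by_cases hw : w ∈ S <;> simp_all

theorem forgetCrossing_swap_smul {u v x y : ι} (hxu : x ≠ u) (hxv : x ≠ v) (hyu : y ≠ u)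
    (hyv : y ≠ v) (hx : x ≤ u ∧ x ≤ v ∨ u < x ∧ v < x) (S : Finset ι) :
    forgetCrossing m x y (swap u v • S) = forgetCrossing m x y S := by
  simp only [forgetCrossing, mem_swap_smul, strandRank_swap_smul hx,
    Equiv.swap_apply_of_ne_of_ne hxu hxv, Equiv.swap_apply_of_ne_of_ne hyu hyv]

theorem commute_forgetCrossing {u v x : ι} (y : ι) (huv : u < v) (hvx : v < x) (S : Finset ι) :
    Commute (forgetCrossing m u v S) (forgetCrossing m x y S) := by
  unfold forgetCrossing
  split_ifs with hmem
  · refine commute_natσ m ?_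
    have := strandRank_lt_strandRank hmem.1 huv
    have := strandRank_lt_strandRank hmem.2 hvx
    omega
  exacts [.one_right _, .one_left _, .one_right _]

theorem crossing_braid {u v w : ι} (huv : u ⋖ v) (hvw : v ⋖ w) :
    crossing m u v * crossing m v w * crossing m u v =
      crossing m v w * crossing m u v * crossing m v w := by
  refine SemidirectProduct.ext (funext fun S ↦ ?_)
    (swap_braid huv.ne hvw.ne (huv.lt.trans hvw.lt).ne)
  simpa [crossing, PermWreathProduct.mul_left_apply, mul_smul] using
    forgetCrossing_braid huv hvw S.2

theorem commute_crossing {u v x y : ι} (huv : u < v) (hvx : v < x) (hxy : x < y) :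
    Commute (crossing m u v) (crossing m x y) := by
  have hux := huv.trans hvx
  have hvy := hvx.trans hxy
  have hswap : Commute (swap u v) (swap x y) := Equiv.Perm.Disjoint.commute <|
    Equiv.Perm.disjoint_swap_swap <| by simp [huv.ne, hux.ne, hvx.ne, hvy.ne, hxy.ne,
      (hux.trans hxy).ne]
  refine SemidirectProduct.ext (funext fun S ↦ ?_) hswap
  have hxy_swap := forgetCrossing_swap_smul (m := m) hux.ne' hvx.ne' (hux.trans hxy).ne' hvy.ne'
    (.inr ⟨hux, hvx⟩) S
  have huv_swap := forgetCrossing_swap_smul (m := m) hux.ne (hux.trans hxy).ne hvx.ne hvy.ne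
    (.inl ⟨hux.le, (hux.trans hxy).le⟩) S
  simpa [crossing, PermWreathProduct.mul_left_apply, hxy_swap, huv_swap] using
    (commute_forgetCrossing y huv hvx S).eq

theorem exists_hom_eq_crossing (m n : ℕ) :
    ∃ ρ : BraidGroup n →*
        PermWreathProduct (BraidGroup m) (Set.powersetCard (Fin n) m) (Equiv.Perm (Fin n)),
      ∀ i : Fin (n - 1), ρ (σ i) = crossing m ⟨i, by omega⟩ ⟨i + 1, by omega⟩ := by
  refine BraidGroup.exists_hom _ (fun i j hij ↦ ?_) (fun i j hij ↦ ?_)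
  · simp only [hij]
    exact crossing_braid (by simp [Fin.covBy_iff]) (by simp [Fin.covBy_iff])
  · exact commute_crossing (by simp) hij (by simp)

theorem strandRank_filter_val_lt {m n : ℕ} {u : Fin n} (hu : u ≤ m) :
    strandRank (Finset.univ.filter fun i : Fin n ↦ i < m) u = u := by
  have hfilter : (Finset.univ.filter fun i : Fin n ↦ i < m).filter (· < u) =
      Finset.univ.filter fun i : Fin n ↦ (i : ℕ) < u := by
    grind
  rw [strandRank, hfilter, Fin.card_filter_val_lt, min_eq_right u.2.le]

theorem virtuallySurjects_braidGroup_of_le {m n : ℕ} (hmn : m ≤ n) :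
    VirtuallySurjects (BraidGroup n) (BraidGroup m) := by
  obtain ⟨ρ, hρ⟩ := exists_hom_eq_crossing m n
  let S : Set.powersetCard (Fin n) m :=
    ⟨Finset.univ.filter fun i : Fin n ↦ i < m, Fin.card_filter_val_lt.trans (min_eq_right hmn)⟩
  refine virtuallySurjects_of_permWreathProduct ρ S (PresentedGroup.closure_range_of _) ?_
  rintro _ ⟨j, rfl⟩
  let u : Fin n := ⟨j, by omega⟩
  let v : Fin n := ⟨j + 1, by omega⟩
  have hu : u ∈ S.1 := Finset.mem_filter.2 ⟨Finset.mem_univ u, show (j : ℕ) < m by omega⟩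
  have hv : v ∈ S.1 := Finset.mem_filter.2 ⟨Finset.mem_univ v, show (j : ℕ) + 1 < m by omega⟩
  have hfix : swap u v • S = S := by
    refine Subtype.ext (Finset.ext fun x ↦ ?_)
    rw [Set.powersetCard.coe_smul, mem_swap_smul, Equiv.swap_apply_def]
    grind
  have hforget : forgetCrossing m u v S = σ j := by
    have hrank : strandRank S.1 u = j :=
      strandRank_filter_val_lt (u := u) (show (j : ℕ) ≤ m by omega)
    rw [forgetCrossing, if_pos ⟨hu, hv⟩, hrank, natσ, dif_pos j.2]
  exact ⟨crossing m u v, ⟨σ ⟨j, by omega⟩, hρ _⟩, hfix, hforget⟩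

end ForgetStrands

/-- STATEMENT 14: for `n ≥ 3` and every positive integer `k` there is a finite index
subgroup `Γ` of `B_n` such that `Hom(Γ, ℤ)` contains a free abelian subgroup of rank
`k` (equivalently, the first Betti number of `Γ` is at least `k`); hence the virtual
first Betti number of `B_n` is infinite. -/
theorem braid_virtual_betti_infinite (n : ℕ) (hn : 3 ≤ n) (k : ℕ) (hk : 0 < k) :
    ∃ Γ : Subgroup (BraidGroup n), Γ.FiniteIndex ∧
      ∃ f : (Fin k → ℤ) →+ (Additive Γ →+ ℤ), Function.Injective f := by
  obtain ⟨Γ, hΓ, φ, hφ⟩ := (virtuallySurjects_braidGroup_of_le hn).trans <|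
    virtuallySurjects_braidGroup_three_freeGroup.trans <|
      virtuallySurjects_freeGroup_of_fg (Multiplicative (Fin k → ℤ))
  exact ⟨Γ, hΓ, exists_injective_addMonoidHom_of_surjective φ.toAdditiveLeft hφ⟩
end
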